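/- Let F be a finite field and let G₀ = PSL₂(F) × PSL₂(F). Then G₀ has trivial center, so it may be identified with the group Inn(G₀) of inner automorphisms inside Aut(G₀). For every group G with Inn(G₀) ≤ G ≤ Aut(G₀) and every maximal subgroup H of G, one has d(G) ≤ 6, d(H) ≤ 8, and d(H ∩ Inn(G₀)) ≤ 4. -/

import Mathlib

/-- The minimal number of generators of a group `G`. -/
noncomputable def minGen (G : Type*) [Group G] : ℕ :=
  sInf {n : ℕ | ∃ S : Finset G, S.card = n ∧ Subgroup.closure (S : Set G) = ⊤}

/-- `PSL₂(F)`: the quotient of `SL₂(F)` by its center. -/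
abbrev PSL2 (F : Type*) [Field F] :=
  Matrix.SpecialLinearGroup (Fin 2) F ⧸
    Subgroup.center (Matrix.SpecialLinearGroup (Fin 2) F)

/-!
Over an algebraic closure of `F`, a nontrivial element of `PSL₂(F)` fixes either one point of the
projective line, and is then unipotent, or two. Counting fixed points as in the Riemann–Hurwitz
formula yields the numerical part of Dickson's classification of the subgroups of `PSL₂(F)`. By
comparing a subgroup with the subgroups generated by suitable pairs of its elements, one finds that
it is generated by two elements unless it fixes a point and contains nontrivial unipotent elements
of that point, and that `PSL₂(F)` itself is generated by two elements `x` and `y` of coprime orders.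
It follows that `(x, y)` and `(y, x)` generate `G₀`.

The outer automorphism group of `PSL₂(F)` maps to the cyclic group `Aut(F)` with a kernel of order
at most two, and that of `G₀` is its wreath product with a group of order two. Hence every subgroup
of `Out(G₀)` is generated by four elements, and it remains to generate `M = H ∩ Inn(G₀)` by four.
Replace each projection of `M` by the stabilizer of `P` if it fixes a point `P` and contains
nontrivial unipotent elements of `P`, and by `PSL₂(F)` otherwise. The product `W` of the two groups
contains `M` and is normalized by `H`, so that `W = M` or `W = G₀` by maximality. In the first case,
each factor of `W` is generated by two elements. In the second case, both the second projection of
`M` and the intersection of `M` with the first factor, which is normal in the first projection, are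
generated by two elements.
-/

open MulAction

section OrbitCounting

variable {M X : Type*} [Group M] [MulAction M X]

theorem ncard_orbit_mul_card_stabilizer (P : X) :
    (orbit M P).ncard * Nat.card (stabilizer M P) = Nat.card M := by
  rw [← index_stabilizer, mul_comm, Subgroup.card_mul_index]

theorem exists_orbit_representatives_sum [Finite M] {A : Type*} [AddCommMonoid A] (Y : Finset X)
    (hY : ∀ g : M, ∀ T ∈ Y, g • T ∈ Y) (f : X → A) (hf : ∀ (g : M) (T : X), f (g • T) = f T) :
    ∃ R ⊆ Y, (∀ T ∈ Y, ∃ P ∈ R, T ∈ orbit M P) ∧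
      ∑ T ∈ Y, f T = ∑ P ∈ R, (orbit M P).ncard • f P := by
  classical
  let r (T : X) : X := (Quotient.mk (orbitRel M X) T).out
  have r_mem_orbit (T : X) : r T ∈ orbit M T := Quotient.mk_out (s := orbitRel M X) T
  have r_eq_iff (S T : X) : r S = r T ↔ S ∈ orbit M T :=
    Quotient.out_inj.trans Quotient.eq
  have r_mem {T : X} (hT : T ∈ Y) : r T ∈ Y := by
    obtain ⟨g, hg⟩ := r_mem_orbit T
    exact hg ▸ hY g T hT
  have f_r (T : X) : f T = f (r T) := by
    obtain ⟨g, hg⟩ := r_mem_orbit T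
    rw [← hg]
    exact (hf g T).symm
  have fiber {T : X} (hT : T ∈ Y) : (Y.filter (r · = r T)).card = (orbit M (r T)).ncard := by
    rw [← Set.ncard_coe_finset, orbit_eq_iff.2 (r_mem_orbit T)]
    congr 1
    ext S
    simp only [Finset.coe_filter, Set.mem_ofPred_eq, r_eq_iff, and_iff_right_iff_imp]
    rintro ⟨g, rfl⟩
    exact hY g T hT
  refine ⟨Y.image r, Finset.image_subset_iff.2 fun T hT => r_mem hT, fun T hT =>
    ⟨r T, Finset.mem_image_of_mem r hT, mem_orbit_symm.1 (r_mem_orbit T)⟩, ?_⟩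
  rw [Finset.sum_congr rfl fun T _ => f_r T, Finset.sum_comp f r]
  refine Finset.sum_congr rfl fun P hP => ?_
  obtain ⟨T, hT, rfl⟩ := Finset.mem_image.1 hP
  rw [fiber hT]

theorem card_dvd_mul_card_of_card_stabilizer_eq [Finite M] (Y : Finset X)
    (hY : ∀ g : M, ∀ T ∈ Y, g • T ∈ Y) (c : ℕ)
    (hc : ∀ T ∈ Y, Nat.card (stabilizer M T) = c) : Nat.card M ∣ c * Y.card := by
  obtain ⟨R, hR, -, hsum⟩ := exists_orbit_representatives_sum Y hY (fun _ => c) fun _ _ => rfl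
  have hterm : ∀ P ∈ R, (orbit M P).ncard • c = Nat.card M := fun P hP => by
    rw [smul_eq_mul, ← hc P (hR hP), ncard_orbit_mul_card_stabilizer]
  rw [Finset.sum_const, Finset.sum_congr rfl hterm, Finset.sum_const, smul_eq_mul, smul_eq_mul,
    mul_comm] at hsum
  exact hsum ▸ Dvd.intro_left _ rfl

end OrbitCounting

section SubgroupLemmas

variable {G : Type*} [Group G]

theorem card_subgroupOf_eq_card_inf (M H : Subgroup G) :
    Nat.card (H.subgroupOf M) = Nat.card (M ⊓ H : Subgroup G) := by
  rw [inf_comm, ← Subgroup.subgroupOf_map_subtype,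
    Subgroup.card_map_of_injective M.subtype_injective]

theorem closure_pair_le {M : Subgroup G} {x y : G} (hx : x ∈ M) (hy : y ∈ M) :
    Subgroup.closure {x, y} ≤ M :=
  (Subgroup.closure_le M).2 (Set.pair_subset hx hy)

theorem left_mem_closure_pair (x y : G) : x ∈ Subgroup.closure {x, y} :=
  Subgroup.subset_closure (Set.mem_insert x {y})

theorem right_mem_closure_pair (x y : G) : y ∈ Subgroup.closure {x, y} :=
  Subgroup.subset_closure (Set.mem_insert_of_mem x rfl)

theorem sum_erase_one_ite_mem [Fintype G] [DecidableEq G] (H : Subgroup G)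
    [DecidablePred (· ∈ H)] :
    ∑ g ∈ Finset.univ.erase (1 : G), (if g ∈ H then (1 : ℤ) else 0) = Nat.card H - 1 := by
  rw [Finset.sum_erase_eq_sub (Finset.mem_univ 1), if_pos H.one_mem, Finset.sum_boole,
    Nat.card_eq_fintype_card, Fintype.card_subtype]

end SubgroupLemmas

/-- The features of the action of `PSL₂(F)` on the projective line over an algebraic closure of `F`
that control its subgroups; `U P` plays the role of the unipotent radical of the stabilizer of `P`,
and characters with values in `Kˣ` identify the quotient with a torus. -/
structure IsMobiusAction {Γ X : Type*} (K : Type*) [Group Γ] [MulAction Γ X] [Field K]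
    (U : X → Subgroup Γ) : Prop where
  exists_smul_eq : ∀ g : Γ, ∃ P : X, g • P = P
  eq_one_of_three_fixed : ∀ (g : Γ) (P R T : X), P ≠ R → P ≠ T → R ≠ T →
    g • P = P → g • R = R → g • T = T → g = 1
  mem_unip_iff : ∀ (g : Γ) (P : X), g ∈ U P ↔ g = 1 ∨ (g • P = P ∧ ∀ R, g • R = R → R = P)
  exists_character : ∀ P : X,
    ∃ χ : MulAction.stabilizer Γ P →* Kˣ, ∀ g, χ g = 1 ↔ (g : Γ) ∈ U P
  unip_comm : ∀ P, ∀ a ∈ U P, ∀ b ∈ U P, a * b = b * a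

section UnipOrder

variable {Γ X : Type*} [Group Γ] {U : X → Subgroup Γ} {L M : Subgroup Γ} {P : X}

/-- The order of the group of elements of `M` that are unipotent at `P`. -/
noncomputable def unipOrder (U : X → Subgroup Γ) (M : Subgroup Γ) (P : X) : ℕ :=
  Nat.card ↥(M ⊓ U P)

theorem unipOrder_dvd_of_le (h : L ≤ M) (P : X) : unipOrder U L P ∣ unipOrder U M P :=
  Subgroup.card_dvd_of_le (inf_le_inf_right _ h)

theorem unipOrder_eq_one_of_le (h : L ≤ M) (hM : unipOrder U M P = 1) : unipOrder U L P = 1 :=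
  Nat.dvd_one.1 (hM ▸ unipOrder_dvd_of_le h P)

theorem eq_one_of_unipOrder_eq_one {g : Γ} (h : unipOrder U M P = 1) (hM : g ∈ M) (hP : g ∈ U P) :
    g = 1 :=
  Subgroup.mem_bot.1 (Subgroup.card_eq_one.1 h ▸ Subgroup.mem_inf.2 ⟨hM, hP⟩)

theorem unipOrder_pos [Finite Γ] (M : Subgroup Γ) (P : X) : 0 < unipOrder U M P := Nat.card_pos

theorem two_le_unipOrder_iff [Finite Γ] :
    2 ≤ unipOrder U M P ↔ ∃ g ∈ M, g ≠ 1 ∧ g ∈ U P := by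
  change 1 < Nat.card ↥(M ⊓ U P) ↔ _
  rw [Subgroup.one_lt_card_iff_ne_bot, Subgroup.ne_bot_iff_exists_ne_one]
  simp only [Subtype.exists, Subgroup.mem_inf, ne_eq, Subgroup.mk_eq_one, exists_prop]
  grind

end UnipOrder

section Orders

variable {Γ X : Type*} [Group Γ] [MulAction Γ X]

/-- The order of the stabilizer of `P` in `M`. -/
noncomputable def stabOrder (M : Subgroup Γ) (P : X) : ℕ :=
  Nat.card ↥(M ⊓ stabilizer Γ P)

/-- The order of the torus at `P`, that is, of the stabilizer of `P` in `M` modulo its unipotent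
elements. -/
noncomputable def torusOrder (U : X → Subgroup Γ) (M : Subgroup Γ) (P : X) : ℕ :=
  (U P).relIndex (M ⊓ stabilizer Γ P)

/-- The number of points in the orbit of `P` under `M`. -/
noncomputable def orbitSize (M : Subgroup Γ) (P : X) : ℕ :=
  (orbit M P).ncard

variable {U : X → Subgroup Γ} {L M : Subgroup Γ} {P T : X}

theorem orbitSize_mul_stabOrder (M : Subgroup Γ) (P : X) :
    orbitSize M P * stabOrder M P = Nat.card M := by
  rw [orbitSize, stabOrder, ← ncard_orbit_mul_card_stabilizer (M := M) P,
    ← card_subgroupOf_eq_card_inf]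
  rfl

theorem stabOrder_dvd_of_le (h : L ≤ M) (P : X) : stabOrder L P ∣ stabOrder M P :=
  Subgroup.card_dvd_of_le (inf_le_inf_right _ h)

theorem stabOrder_dvd_card (M : Subgroup Γ) (P : X) : stabOrder M P ∣ Nat.card M :=
  Dvd.intro_left _ (orbitSize_mul_stabOrder M P)

theorem orbitSize_eq_of_mem_orbit (h : T ∈ orbit M P) : orbitSize M T = orbitSize M P := by
  rw [orbitSize, orbit_eq_iff.2 h, orbitSize]

theorem mem_of_inf_stabilizer_eq_zpowers {x : Γ}
    (hx : M ⊓ stabilizer Γ P = Subgroup.zpowers x) : x ∈ M ∧ x • P = P :=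
  Subgroup.mem_inf.1 (hx ▸ Subgroup.mem_zpowers x)

theorem orderOf_eq_stabOrder {x : Γ} (hx : M ⊓ stabilizer Γ P = Subgroup.zpowers x) :
    orderOf x = stabOrder M P := by
  rw [stabOrder, hx, Nat.card_zpowers]

theorem smul_eq_of_mem_zpowers {x z : Γ} (hz : z ∈ Subgroup.zpowers x) (h : x • P = P) :
    z • P = P :=
  (Subgroup.zpowers_le (H := stabilizer Γ P)).2 h hz

theorem stabOrder_eq_of_le {x : Γ} (h : L ≤ M)
    (hx : M ⊓ stabilizer Γ P = Subgroup.zpowers x) (hxL : x ∈ L) :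
    stabOrder L P = stabOrder M P := by
  have : L ⊓ stabilizer Γ P = M ⊓ stabilizer Γ P :=
    le_antisymm (inf_le_inf_right _ h)
      (le_inf (hx ▸ (Subgroup.zpowers_le).2 hxL) inf_le_right)
  rw [stabOrder, stabOrder, this]

theorem ne_one_of_two_le_stabOrder {x : Γ} (hx : M ⊓ stabilizer Γ P = Subgroup.zpowers x)
    (h : 2 ≤ stabOrder M P) : x ≠ 1 := by
  rintro rfl
  rw [← orderOf_eq_stabOrder hx, orderOf_one] at h
  omega

variable [Finite Γ]

theorem stabOrder_pos (M : Subgroup Γ) (P : X) : 0 < stabOrder M P := Nat.card_pos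

theorem torusOrder_pos (M : Subgroup Γ) (P : X) : 0 < torusOrder U M P :=
  Nat.pos_of_ne_zero Subgroup.index_ne_zero_of_finite

theorem orbitSize_pos (M : Subgroup Γ) (P : X) : 0 < orbitSize M P :=
  Nat.pos_of_mul_pos_right (orbitSize_mul_stabOrder M P ▸ Nat.card_pos)

theorem torusOrder_mono (h : L ≤ M) (P : X) : torusOrder U L P ≤ torusOrder U M P :=
  Subgroup.relIndex_le_of_le_right (inf_le_inf_right _ h) Subgroup.index_ne_zero_of_finite

theorem stabOrder_le_of_le (h : L ≤ M) (P : X) : stabOrder L P ≤ stabOrder M P :=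
  Nat.le_of_dvd (stabOrder_pos M P) (stabOrder_dvd_of_le h P)

theorem stabOrder_eq_of_mem_orbit (h : T ∈ orbit M P) : stabOrder M T = stabOrder M P := by
  have hT := orbitSize_mul_stabOrder M T
  rw [orbitSize_eq_of_mem_orbit h, ← orbitSize_mul_stabOrder M P] at hT
  exact Nat.eq_of_mul_eq_mul_left (orbitSize_pos M P) hT

theorem le_stabilizer_of_orbitSize_eq_one (h : orbitSize M P = 1) : M ≤ stabilizer Γ P := by
  have hcard := orbitSize_mul_stabOrder M P
  rw [h, one_mul] at hcard
  exact inf_eq_left.1 (Subgroup.eq_of_le_of_card_ge inf_le_left hcard.ge)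

theorem two_le_stabOrder_iff : 2 ≤ stabOrder M P ↔ ∃ g ∈ M, g ≠ 1 ∧ g • P = P :=
  two_le_unipOrder_iff (U := fun P : X => stabilizer Γ P)

end Orders

namespace IsMobiusAction

variable {Γ X K : Type*} [Group Γ] [MulAction Γ X] [Field K] {U : X → Subgroup Γ}
  (Z : IsMobiusAction K U)

include Z

theorem unip_le_stabilizer (P : X) : U P ≤ stabilizer Γ P := by
  intro g hg
  rcases (Z.mem_unip_iff g P).1 hg with rfl | h
  · exact one_mem _
  · exact h.1

theorem eq_of_smul_eq {P R : X} {y : Γ} (hy : y ∈ U P) (hy1 : y ≠ 1) (hR : y • R = R) : R = P :=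
  (((Z.mem_unip_iff y P).1 hy).resolve_left hy1).2 R hR

theorem conj_mem_unip {P : X} {y : Γ} (g : Γ) (hy : y ∈ U P) : g * y * g⁻¹ ∈ U (g • P) := by
  rw [Z.mem_unip_iff] at hy ⊢
  rcases hy with rfl | ⟨hP, huniq⟩
  · simp
  · refine Or.inr ⟨by simp [mul_smul, hP], fun R hR => ?_⟩
    rw [mul_smul, mul_smul, smul_eq_iff_eq_inv_smul] at hR
    rw [← huniq _ hR, smul_inv_smul]

theorem conj_mem_unip_iff {P : X} {y : Γ} (g : Γ) : g * y * g⁻¹ ∈ U (g • P) ↔ y ∈ U P := by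
  refine ⟨fun h => ?_, Z.conj_mem_unip g⟩
  simpa [mul_assoc] using Z.conj_mem_unip g⁻¹ h

theorem mem_unip_of_commute {P : X} {y z : Γ} (hy : y ∈ U P) (hy1 : y ≠ 1)
    (hzy : z * y = y * z) : z ∈ U P := by
  have hyP : y • P = P := Z.unip_le_stabilizer P hy
  have hzP : z • P = P := Z.eq_of_smul_eq hy hy1 (by rw [← mul_smul, ← hzy, mul_smul, hyP])
  refine (Z.mem_unip_iff z P).2 (or_iff_not_imp_left.2 fun hz1 => ⟨hzP, fun R hR => ?_⟩)
  by_contra hRP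
  -- Otherwise `z` fixes the three points `P`, `R` and `y • R`.
  refine hz1 (Z.eq_one_of_three_fixed z P R (y • R) (Ne.symm hRP) (fun h => hRP ?_)
    (fun h => hRP (Z.eq_of_smul_eq hy hy1 h.symm)) hzP hR ?_)
  · exact (smul_left_cancel y (hyP.trans h)).symm
  · rw [← mul_smul, hzy, mul_smul, hR]

theorem exists_unique_fixed_or_two_fixed {g : Γ} (hg : g ≠ 1) :
    (∃ P, ∀ R, (g • R = R ↔ R = P) ∧ (g ∈ U R ↔ R = P)) ∨
    (∃ P P', P ≠ P' ∧ ∀ R, (g • R = R ↔ R = P ∨ R = P') ∧ g ∉ U R) := by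
  obtain ⟨P, hP⟩ := Z.exists_smul_eq g
  by_cases h : ∀ R, g • R = R → R = P
  · refine Or.inl ⟨P, fun R => ⟨⟨h R, fun e => e ▸ hP⟩,
      fun hR => h R (Z.unip_le_stabilizer R hR), ?_⟩⟩
    rintro rfl
    exact (Z.mem_unip_iff _ _).2 (Or.inr ⟨hP, h⟩)
  · push Not at h
    obtain ⟨P', hP', hne⟩ := h
    refine Or.inr ⟨P, P', hne.symm, fun R => ⟨⟨fun hR => ?_, ?_⟩, fun hR => ?_⟩⟩
    · by_contra! hcon
      exact hg (Z.eq_one_of_three_fixed g P P' R hne.symm hcon.1.symm hcon.2.symm hP hP' hR)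
    · rintro (rfl | rfl) <;> assumption
    · exact hne ((Z.eq_of_smul_eq hR hg hP').trans (Z.eq_of_smul_eq hR hg hP).symm)

theorem exists_second_fixed {x : Γ} (hx1 : x ≠ 1) {P : X} (hP : x • P = P) (hU : x ∉ U P) :
    ∃ P', P' ≠ P ∧ ∀ R, x • R = R ↔ R = P ∨ R = P' := by
  rcases Z.exists_unique_fixed_or_two_fixed hx1 with ⟨A, hA⟩ | ⟨A, B, hAB, hA⟩
  · exact absurd ((hA P).2.2 ((hA P).1.1 hP)) hU
  · rcases (hA P).1.1 hP with rfl | rfl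
    · exact ⟨B, hAB.symm, fun R => (hA R).1⟩
    · exact ⟨A, hAB, fun R => (hA R).1.trans or_comm⟩

theorem finite_setOf_smul_eq {g : Γ} (hg : g ≠ 1) : {P : X | g • P = P}.Finite := by
  rcases Z.exists_unique_fixed_or_two_fixed hg with ⟨P, hP⟩ | ⟨P, P', -, hP⟩
  · exact (Set.finite_singleton P).subset fun R hR => (hP R).1.1 hR
  · exact (Set.toFinite {P, P'}).subset fun R hR => (hP R).1.1 hR

theorem unipOrder_eq_of_mem_orbit {M : Subgroup Γ} {P T : X} (h : T ∈ orbit M P) :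
    unipOrder U M T = unipOrder U M P := by
  obtain ⟨⟨g, hg⟩, rfl⟩ := h
  refine (Nat.card_congr ((MulAut.conj g).toEquiv.subtypeEquiv fun y => ?_)).symm
  change y ∈ M ∧ y ∈ U P ↔ g * y * g⁻¹ ∈ M ∧ g * y * g⁻¹ ∈ U (g • P)
  rw [Z.conj_mem_unip_iff, Subgroup.mul_mem_cancel_right _ (inv_mem hg),
    Subgroup.mul_mem_cancel_left _ hg]

theorem stabOrder_eq_mul (M : Subgroup Γ) (P : X) :
    stabOrder M P = unipOrder U M P * torusOrder U M P := by
  have h := Subgroup.card_mul_index ((U P).subgroupOf (M ⊓ stabilizer Γ P))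
  rw [card_subgroupOf_eq_card_inf, inf_assoc, inf_eq_right.2 (Z.unip_le_stabilizer P)] at h
  exact h.symm

theorem sum_fixed_add_unip [DecidableEq X] [∀ P, DecidablePred (· ∈ U P)] {g : Γ} (hg : g ≠ 1)
    {Y : Finset X} (hY : ∀ P, g • P = P → P ∈ Y) :
    ∑ P ∈ Y, ((if g • P = P then (1 : ℤ) else 0) + if g ∈ U P then 1 else 0) = 2 := by
  rcases Z.exists_unique_fixed_or_two_fixed hg with ⟨P, hP⟩ | ⟨P, P', hne, hP⟩
  · have hPY : P ∈ Y := hY P ((hP P).1.2 rfl)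
    simp [fun R => (hP R).1, fun R => (hP R).2, Finset.sum_add_distrib, hPY]
  · have hfix : Y.filter (fun R => R = P ∨ R = P') = {P, P'} := by
      ext R
      simp only [Finset.mem_filter, Finset.mem_insert, Finset.mem_singleton, and_iff_right_iff_imp]
      exact fun h => hY R ((hP R).1.2 h)
    simp only [fun R => (hP R).1, fun R => (hP R).2, if_false, add_zero]
    rw [Finset.sum_boole, hfix, Finset.card_pair hne]
    norm_num

variable [Finite Γ]

theorem finite_setOf_two_le_stabOrder (M : Subgroup Γ) : {P : X | 2 ≤ stabOrder M P}.Finite := by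
  refine ((Set.toFinite {g : Γ | g ≠ 1}).biUnion fun g hg =>
    Z.finite_setOf_smul_eq hg).subset fun P hP => ?_
  obtain ⟨g, -, hg1, hgP⟩ := two_le_stabOrder_iff.1 hP
  exact Set.mem_biUnion (show g ∈ {g : Γ | g ≠ 1} from hg1) hgP

/-- The analogue of the Riemann–Hurwitz formula, with wild ramification measured by `unipOrder`:
count the pairs of a nontrivial `g ∈ M` and a fixed point of `g`, with multiplicity two for
unipotent `g`, so that every `g` contributes two. -/
theorem exists_riemann_hurwitz (M : Subgroup Γ) :
    ∃ R : Finset X, (∀ P ∈ R, 2 ≤ stabOrder M P) ∧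
      (∀ T, 2 ≤ stabOrder M T → ∃ P ∈ R, T ∈ orbit M P) ∧
      2 * ((Nat.card M : ℤ) - 1) =
        ∑ P ∈ R, (orbitSize M P : ℤ) * (stabOrder M P + unipOrder U M P - 2) := by
  classical
  have := Fintype.ofFinite Γ
  set Y := (Z.finite_setOf_two_le_stabOrder M).toFinset with hYdef
  have mem_Y (P : X) : P ∈ Y ↔ 2 ≤ stabOrder M P := by simp [hYdef]
  have double_count : ∑ P ∈ Y, (stabOrder M P + unipOrder U M P - 2 : ℤ) =
      2 * ((Nat.card M : ℤ) - 1) := by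
    calc ∑ P ∈ Y, (stabOrder M P + unipOrder U M P - 2 : ℤ)
        = ∑ P ∈ Y, ∑ g ∈ Finset.univ.erase (1 : Γ),
            ((if g ∈ M ⊓ stabilizer Γ P then (1 : ℤ) else 0) + if g ∈ M ⊓ U P then 1 else 0) := by
          refine Finset.sum_congr rfl fun P _ => ?_
          rw [Finset.sum_add_distrib, sum_erase_one_ite_mem, sum_erase_one_ite_mem, stabOrder,
            unipOrder]
          ring
      _ = ∑ g ∈ Finset.univ.erase (1 : Γ), 2 * (if g ∈ M then (1 : ℤ) else 0) := by
          rw [Finset.sum_comm]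
          refine Finset.sum_congr rfl fun g hg => ?_
          by_cases hgM : g ∈ M
          · have hg1 := Finset.ne_of_mem_erase hg
            simpa [hgM] using Z.sum_fixed_add_unip hg1 (Y := Y) fun P hP =>
              (mem_Y P).2 (two_le_stabOrder_iff.2 ⟨g, hgM, hg1, hP⟩)
          · simp [hgM]
      _ = 2 * ((Nat.card M : ℤ) - 1) := by rw [← Finset.mul_sum, sum_erase_one_ite_mem]
  obtain ⟨R, hRY, hcover, hsum⟩ := exists_orbit_representatives_sum (M := M) Y
    (fun g T hT => by
      rw [mem_Y] at hT ⊢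
      rwa [stabOrder_eq_of_mem_orbit (mem_orbit T g)])
    (fun P => (stabOrder M P + unipOrder U M P - 2 : ℤ))
    (fun g T => by
      rw [stabOrder_eq_of_mem_orbit (mem_orbit T g), Z.unipOrder_eq_of_mem_orbit (mem_orbit T g)])
  simp only [nsmul_eq_mul] at hsum
  exact ⟨R, fun P hP => (mem_Y P).1 (hRY hP), fun T hT => hcover T ((mem_Y T).2 hT),
    double_count.symm.trans hsum⟩

theorem torusOrder_dvd_unipOrder_sub_one (M : Subgroup Γ) (P : X) :
    torusOrder U M P ∣ unipOrder U M P - 1 := by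
  classical
  have := Fintype.ofFinite Γ
  -- The stabilizer of `P` acts by conjugation on the nontrivial elements of `M ⊓ U P`, and there
  -- the stabilizer of each element is `M ⊓ U P`.
  let A := M ⊓ stabilizer Γ P
  let : MulAction A Γ := MulAction.compHom Γ (MulAut.conj.comp A.subtype)
  have smul_def (a : A) (y : Γ) : a • y = a * y * (a : Γ)⁻¹ := rfl
  let Y : Finset Γ := (Finset.univ.filter (· ∈ M ⊓ U P)).erase 1
  have mem_Y (y : Γ) : y ∈ Y ↔ y ≠ 1 ∧ y ∈ M ∧ y ∈ U P := by simp [Y]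
  have card_Y : Y.card = unipOrder U M P - 1 := by
    rw [Finset.card_erase_of_mem (by simp), unipOrder, Nat.card_eq_fintype_card,
      Fintype.card_subtype]
  have smul_mem (a : A) (y : Γ) (hy : y ∈ Y) : a • y ∈ Y := by
    rw [mem_Y] at hy ⊢
    have hmem := Z.conj_mem_unip (a : Γ) hy.2.2
    rw [show (a : Γ) • P = P from a.2.2] at hmem
    exact ⟨by simpa [smul_def] using hy.1, mul_mem (mul_mem a.2.1 hy.2.1) (inv_mem a.2.1), hmem⟩
  have card_stabilizer (y : Γ) (hy : y ∈ Y) : Nat.card (stabilizer A y) = unipOrder U M P := by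
    rw [mem_Y] at hy
    have : stabilizer A y = (U P).subgroupOf A := by
      ext a
      rw [mem_stabilizer_iff, smul_def, Subgroup.mem_subgroupOf, mul_inv_eq_iff_eq_mul]
      exact ⟨Z.mem_unip_of_commute hy.2.2 hy.1, fun h => Z.unip_comm P _ h _ hy.2.2⟩
    rw [this, card_subgroupOf_eq_card_inf, inf_assoc, inf_eq_right.2 (Z.unip_le_stabilizer P)]
    rfl
  have hdvd := card_dvd_mul_card_of_card_stabilizer_eq Y smul_mem _ card_stabilizer
  rw [card_Y, show Nat.card A = _ from Z.stabOrder_eq_mul M P] at hdvd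
  exact Nat.dvd_of_mul_dvd_mul_left (unipOrder_pos M P) hdvd

theorem unipOrder_dvd_orbitSize_sub_one (M : Subgroup Γ) (P : X) :
    unipOrder U M P ∣ orbitSize M P - 1 := by
  classical
  -- `M ⊓ U P` acts freely on the rest of the orbit of `P`.
  let A := M ⊓ U P
  have orbit_finite : (orbit M P).Finite := Set.finite_range _
  let Y : Finset X := orbit_finite.toFinset.erase P
  have mem_Y (T : X) : T ∈ Y ↔ T ≠ P ∧ T ∈ orbit M P := by simp [Y]
  have card_Y : Y.card = orbitSize M P - 1 := by
    rw [Finset.card_erase_of_mem (by simp), orbitSize, Set.ncard_eq_toFinset_card _ orbit_finite]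
  have smul_mem (a : A) (T : X) (hT : T ∈ Y) : a • T ∈ Y := by
    rw [mem_Y] at hT ⊢
    have haP : a • P = P := Z.unip_le_stabilizer P a.2.2
    exact ⟨fun h => hT.1 (smul_left_cancel a (h.trans haP.symm)),
      mem_orbit_of_mem_orbit (⟨a, a.2.1⟩ : M) hT.2⟩
  have card_stabilizer (T : X) (hT : T ∈ Y) : Nat.card (stabilizer A T) = 1 := by
    rw [Subgroup.card_eq_one, eq_bot_iff]
    intro a ha
    by_contra ha1
    exact ((mem_Y T).1 hT).1 (Z.eq_of_smul_eq a.2.2 (fun h => ha1 (Subtype.ext h)) ha)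
  have hdvd := card_dvd_mul_card_of_card_stabilizer_eq Y smul_mem 1 card_stabilizer
  rwa [one_mul, card_Y] at hdvd

end IsMobiusAction

section ClassEquations

/-- The largest order `s` of a point stabilizer and the order `g` of a tetrahedral, octahedral or
icosahedral group acting on its poles. -/
def IsPolyhedral (s g : ℕ) : Prop :=
  (s = 3 ∧ g = 12) ∨ (s = 4 ∧ g = 24) ∨ (s = 5 ∧ g = 60)

theorem dihedral_or_polyhedral_of_add_two_eq {g n₁ n₂ n₃ s₁ s₂ s₃ : ℕ} (h₁ : n₁ * s₁ = g)
    (h₂ : n₂ * s₂ = g) (h₃ : n₃ * s₃ = g) (two_le : 2 ≤ s₁) (h₁₂ : s₁ ≤ s₂) (h₂₃ : s₂ ≤ s₃)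
    (h : g + 2 = n₁ + n₂ + n₃) :
    s₁ = 2 ∧ ((s₂ = 2 ∧ g = 2 * s₃) ∨ (s₂ = 3 ∧ IsPolyhedral s₃ g)) := by
  have mul_le {n s c : ℕ} (hns : n * s = g) (hc : c ≤ s) : n * c ≤ g :=
    hns ▸ Nat.mul_le_mul_left n hc
  have s₁_eq : s₁ = 2 := by
    by_contra hne
    have := mul_le h₁ (show 3 ≤ s₁ by omega)
    have := mul_le h₂ (show 3 ≤ s₂ by omega)
    have := mul_le h₃ (show 3 ≤ s₃ by omega)
    omega
  subst s₁_eq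
  have s₂_le : s₂ ≤ 3 := by
    by_contra hne
    have := mul_le h₂ (show 4 ≤ s₂ by omega)
    have := mul_le h₃ (show 4 ≤ s₃ by omega)
    omega
  refine ⟨rfl, ?_⟩
  interval_cases s₂
  · have n₃_eq : n₃ = 2 := by omega
    exact Or.inl ⟨rfl, by rw [← h₃, n₃_eq]⟩
  · have s₃_le : s₃ ≤ 5 := by
      by_contra hne
      have := mul_le h₃ (show 6 ≤ s₃ by omega)
      omega
    refine Or.inr ⟨rfl, ?_⟩
    unfold IsPolyhedral
    interval_cases s₃ <;> omega

/-- The numerical types in Dickson's classification of the groups that contain unipotents but fix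
no point. Here `q` and `k` are the orders of the unipotent group and of the torus at a point with
unipotents, `s` is the order of the stabilizer at a ramified point without unipotents, and `g` is
the order of the group. The type `linear` is that of `PSL₂(q)` (if `e = 2`) and `PGL₂(q)`
(if `e = 1`). -/
inductive DicksonType (q k s g : ℕ) : Prop
  | dihedral (hq : q = 2) (hk : k = 1) (three_le : 3 ≤ s) (odd : Odd s) (hg : g = 2 * s)
  | linear (e : ℕ) (he : e = 1 ∨ e = 2) (three_le : 3 ≤ q) (hk : e * k + 1 = q)
      (hs : e * s = q + 1) (hg : g = (q + 1) * q * k)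
  | icosahedral (hq : q = 3) (hk : k = 2) (hs : s = 5) (hg : g = 60)

theorem exists_linear_parameter {r k s : ℕ} (hk : 0 < k) (hkr : k ≤ r + 1)
    (hdvd : r + 1 ∣ 2 * k) (h : (r + 1) * s = (r + 3) * k) :
    ∃ e, (e = 1 ∨ e = 2) ∧ e * k = r + 1 ∧ e * s = r + 3 := by
  obtain ⟨c, hc⟩ := hdvd
  have c_pos : c ≠ 0 := by rintro rfl; omega
  have c_le : c ≤ 2 := Nat.le_of_mul_le_mul_left (by omega : (r + 1) * c ≤ (r + 1) * 2) (by omega)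
  obtain rfl | rfl : c = 1 ∨ c = 2 := by omega
  · refine ⟨2, Or.inr rfl, by omega, Nat.eq_of_mul_eq_mul_left r.succ_pos ?_⟩
    calc (r + 1) * (2 * s) = (r + 3) * (2 * k) := by linear_combination 2 * h
      _ = (r + 1) * (r + 3) := by rw [hc]; ring
  · have hk' : k = r + 1 := by omega
    refine ⟨1, Or.inl rfl, by omega, Nat.eq_of_mul_eq_mul_left r.succ_pos ?_⟩
    rw [one_mul, h, hk', mul_comm]

theorem dicksonType_of_orbitSizes {g n₁ n₂ q k s m : ℕ} (h₁ : n₁ * (q * k) = g) (h₂ : n₂ * s = g)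
    (hq : 2 ≤ q) (hn₁ : n₁ = 1 + q * m) (hm : 1 ≤ m) (hkq : k ∣ q - 1) (hk : 0 < k)
    (h : (n₂ : ℤ) = n₁ * ((q : ℤ) - 2) + 2) : DicksonType q k s g := by
  obtain ⟨r, rfl⟩ : ∃ r, q = r + 2 := ⟨q - 2, by omega⟩
  have hn₂ : n₂ = (r + 2) * (1 + r * m) := by
    zify
    rw [h, hn₁]
    push_cast
    ring
  have key : (1 + r * m) * s = (1 + (r + 2) * m) * k := by
    refine Nat.eq_of_mul_eq_mul_left (by omega : 0 < r + 2) ?_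
    rw [← mul_assoc, ← hn₂, h₂, ← h₁, hn₁]
    ring
  have k_le : k ≤ r + 1 := Nat.le_of_dvd (by omega) (by simpa using hkq)
  have dvd_two_mul : 1 + r * m ∣ 2 * k := by
    have hsum : 1 + r * m ∣ (1 + r * m) * k + m * (2 * k) := ⟨s, by rw [key]; ring⟩
    exact (show Nat.Coprime (1 + r * m) m by simp).dvd_of_dvd_mul_left
      ((Nat.dvd_add_right (Dvd.intro _ rfl)).1 hsum)
  have le_two_mul : 1 + r * m ≤ 2 * k := Nat.le_of_dvd (by omega) dvd_two_mul
  rcases Nat.eq_zero_or_pos r with rfl | hr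
  · obtain rfl : k = 1 := by omega
    obtain rfl : s = 1 + 2 * m := by simpa using key
    exact .dihedral rfl rfl (by omega) ⟨m, by ring⟩ (by rw [← h₁, hn₁]; ring)
  have m_le : m ≤ 3 := by
    by_contra hne
    have : r * 4 ≤ r * m := Nat.mul_le_mul_left _ (by omega)
    omega
  interval_cases m
  · obtain ⟨e, he, hek, hes⟩ := exists_linear_parameter (s := s) hk k_le
      (by simpa [add_comm] using dvd_two_mul) (by linear_combination key)
    exact .linear e he (by omega) (by omega) (by omega) (by rw [← h₁, hn₁]; ring)
  · have hdvd := (show Nat.Coprime (1 + r * 2) 2 by simp).dvd_of_dvd_mul_left dvd_two_mul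
    have := Nat.le_of_dvd hk hdvd
    omega
  · obtain rfl : r = 1 := by omega
    obtain rfl : k = 2 := by omega
    exact .icosahedral rfl rfl (by omega) (by rw [← h₁, hn₁])

namespace DicksonType

variable {q k s g q' k' g' : ℕ}

theorem torus_lt (h : DicksonType q k s g) : k < s := by
  rcases h with ⟨_, _, _, _, _⟩ | ⟨e, rfl | rfl, _, _, _, _⟩ | ⟨_, _, _, _⟩ <;> omega

theorem coprime (h : DicksonType q k s g) : s.Coprime q := by
  rcases h with ⟨hq, _, _, hs, _⟩ | ⟨e, _, _, _, hs, _⟩ | ⟨hq, _, hs, _⟩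
  · rwa [hq, Nat.coprime_two_right]
  · have : (e * s).Coprime q := by rw [hs]; simp
    exact this.coprime_mul_left
  · rw [hq, hs]; norm_num

theorem eq_of_linear {e e' : ℕ} (he : e = 1 ∨ e = 2) (he' : e' = 1 ∨ e' = 2) (hq' : 3 ≤ q')
    (hk : e * k + 1 = q) (hs : e * s = q + 1) (hk' : e' * k' + 1 = q') (hs' : e' * s = q' + 1)
    (hd : q' ∣ q) : q = q' ∧ k = k' := by
  have hle := Nat.le_of_dvd (by omega) hd
  rcases he with rfl | rfl <;> rcases he' with rfl | rfl
  · omega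
  · omega
  · have hq : q = q' * 2 + 1 := by omega
    rw [hq, Nat.dvd_add_right (Dvd.intro _ rfl)] at hd
    have := Nat.le_of_dvd one_pos hd
    omega
  · omega

/-- The exceptional last case is that of an icosahedral subgroup of `PSL₂(9)`, which is isomorphic
to the alternating group of degree six. -/
theorem eq_or_dihedral_or_exceptional (h : DicksonType q k s g) (h' : DicksonType q' k' s g')
    (hd : q' ∣ q) :
    g' = g ∨ (3 ≤ q ∧ g' = 2 * s) ∨ (q = 9 ∧ k = 4 ∧ s = 5 ∧ g = 360) := by
  rcases h with ⟨rfl, hk, -, -, hg⟩ | ⟨e, he, hq3, hk, hs, hg⟩ | ⟨rfl, hk, hs, hg⟩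
  · have hle := Nat.le_of_dvd two_pos hd
    rcases h' with ⟨-, -, -, -, hg'⟩ | ⟨_, _, hq3', _, _, _⟩ | ⟨hq', _, _, _⟩ <;> omega
  · rcases h' with ⟨-, -, -, -, hg'⟩ | ⟨e', he', hq3', hk', hs', hg'⟩ | ⟨-, -, hs', hg'⟩
    · omega
    · obtain ⟨rfl, rfl⟩ := eq_of_linear he he' hq3' hk hs hk' hs' hd
      exact Or.inl (hg'.trans hg.symm)
    · rcases he with rfl | rfl
      · obtain ⟨rfl, rfl⟩ : q = 4 ∧ k = 3 := by omega
        omega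
      · obtain ⟨rfl, rfl⟩ : q = 9 ∧ k = 4 := by omega
        omega
  · have hle := Nat.le_of_dvd three_pos hd
    rcases h' with ⟨rfl, -, -, -, -⟩ | ⟨_, rfl | rfl, _, _, _, _⟩ | ⟨-, -, -, hg'⟩ <;> omega

end DicksonType

theorem exists_sorted_triple {α : Type*} [DecidableEq α] (f : α → ℕ) {R : Finset α}
    (h : R.card = 3) :
    ∃ a b c, R = {a, b, c} ∧ a ≠ b ∧ a ≠ c ∧ b ≠ c ∧ f a ≤ f b ∧ f b ≤ f c := by
  obtain ⟨c, hc, hmax⟩ := R.exists_max_image f (Finset.card_pos.1 (by omega))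
  obtain ⟨a, b, hab, hR⟩ := Finset.card_eq_two.1 (by rw [Finset.card_erase_of_mem hc, h])
  wlog hle : f a ≤ f b generalizing a b
  · exact this b a hab.symm (hR.trans (Finset.pair_comm a b)) (by omega)
  have ha : a ≠ c ∧ a ∈ R := Finset.mem_erase.1 (by simp [hR])
  have hb : b ≠ c ∧ b ∈ R := Finset.mem_erase.1 (by simp [hR])
  refine ⟨a, b, c, ?_, hab, ha.1, hb.1, hle, hmax b hb.2⟩
  rw [← Finset.insert_erase hc, hR]
  grind

end ClassEquations

section Classification

variable {Γ X K : Type*} [Group Γ] [MulAction Γ X] [Field K] {U : X → Subgroup Γ}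

/-- The types of finite groups without unipotents, described by the points of `X` with
nontrivial stabilizer. -/
inductive SemisimpleType (X : Type*) [MulAction Γ X] (M : Subgroup Γ) : Prop
  | trivial (h : M = ⊥)
  | cyclic (P : X) (h : M ≤ stabilizer Γ P)
  | dihedral (P : X) (two_le : 2 ≤ stabOrder M P) (card_eq : Nat.card M = 2 * stabOrder M P)
      (stabOrder_eq : ∀ T : X, 2 ≤ stabOrder M T → stabOrder M T = 2 ∨
        stabOrder M T = stabOrder M P)
      (mem_orbit : ∀ T : X, 3 ≤ stabOrder M T → T ∈ orbit M P)
  | polyhedral (P : X) (h : IsPolyhedral (stabOrder M P) (Nat.card M))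
      (stabOrder_eq : ∀ T : X, 2 ≤ stabOrder M T → stabOrder M T = 2 ∨ stabOrder M T = 3 ∨
        stabOrder M T = stabOrder M P)

theorem orbitSize_mul_ramification (M : Subgroup Γ) (P : X) :
    (orbitSize M P : ℤ) * (stabOrder M P + unipOrder U M P - 2) =
      Nat.card M + orbitSize M P * ((unipOrder U M P : ℤ) - 2) := by
  rw [← orbitSize_mul_stabOrder M P]
  push_cast
  ring

theorem card_le_two_mul_ramification [Finite Γ] {M : Subgroup Γ} {P : X}
    (h : 2 ≤ stabOrder M P) :
    (Nat.card M : ℤ) ≤ 2 * (Nat.card M + orbitSize M P * ((unipOrder U M P : ℤ) - 2)) := by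
  have hq : (1 : ℤ) ≤ unipOrder U M P := by exact_mod_cast unipOrder_pos M P
  have hs : (orbitSize M P : ℤ) * 2 ≤ Nat.card M := by
    exact_mod_cast orbitSize_mul_stabOrder M P ▸ Nat.mul_le_mul_left (orbitSize M P) h
  nlinarith [(orbitSize M P).cast_nonneg (α := ℤ)]

namespace IsMobiusAction

variable [Finite Γ] (Z : IsMobiusAction K U)

include Z

theorem exists_semisimple_class_equation {M : Subgroup Γ} (hM : ∀ T, unipOrder U M T = 1) :
    ∃ R : Finset X, R.card ≤ 3 ∧ (∀ P ∈ R, 2 ≤ stabOrder M P) ∧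
      (∀ T, 2 ≤ stabOrder M T → ∃ P ∈ R, T ∈ orbit M P) ∧
      2 * ((Nat.card M : ℤ) - 1) = ∑ P ∈ R, ((Nat.card M : ℤ) - orbitSize M P) := by
  obtain ⟨R, two_le, cover, hsum⟩ := Z.exists_riemann_hurwitz M
  have hterm (P : X) : (Nat.card M : ℤ) + orbitSize M P * ((unipOrder U M P : ℤ) - 2) =
      Nat.card M - orbitSize M P := by
    rw [hM P]
    push_cast
    ring
  simp only [orbitSize_mul_ramification, hterm] at hsum
  refine ⟨R, ?_, two_le, cover, hsum⟩
  have hle : R.card • (Nat.card M : ℤ) ≤ ∑ P ∈ R, 2 * ((Nat.card M : ℤ) - orbitSize M P) :=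
    Finset.card_nsmul_le_sum _ _ _ fun P hP =>
      (card_le_two_mul_ramification (two_le P hP)).trans_eq (congrArg (2 * ·) (hterm P))
  rw [← Finset.mul_sum, ← hsum, nsmul_eq_mul] at hle
  by_contra! hR
  have : (4 : ℤ) ≤ R.card := by exact_mod_cast hR
  nlinarith

theorem semisimpleType {M : Subgroup Γ} (hM : ∀ T, unipOrder U M T = 1) :
    SemisimpleType X M := by
  classical
  obtain ⟨R, card_le, two_le, cover, hsum⟩ := Z.exists_semisimple_class_equation hM
  have card_pos : 0 < Nat.card M := Nat.card_pos
  obtain h | h | h | h : R.card = 0 ∨ R.card = 1 ∨ R.card = 2 ∨ R.card = 3 := by omega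
  · rw [Finset.card_eq_zero.1 h, Finset.sum_empty] at hsum
    exact .trivial (Subgroup.card_eq_one.1 (by omega))
  · obtain ⟨P, rfl⟩ := Finset.card_eq_one.1 h
    rw [Finset.sum_singleton] at hsum
    have hs := Nat.mul_le_mul_left (orbitSize M P) (two_le P (by simp))
    rw [orbitSize_mul_stabOrder] at hs
    have := orbitSize_pos M P
    omega
  · obtain ⟨P, P', hne, rfl⟩ := Finset.card_eq_two.1 h
    rw [Finset.sum_pair hne] at hsum
    have := orbitSize_pos M P
    have := orbitSize_pos M P'
    exact .cyclic P (le_stabilizer_of_orbitSize_eq_one (by omega))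
  · obtain ⟨a, b, c, rfl, hab, hac, hbc, hle₁, hle₂⟩ := exists_sorted_triple (stabOrder M) h
    rw [Finset.sum_insert (by simp [hab, hac]), Finset.sum_pair hbc] at hsum
    obtain ⟨ha, hb⟩ := dihedral_or_polyhedral_of_add_two_eq (orbitSize_mul_stabOrder M a)
      (orbitSize_mul_stabOrder M b) (orbitSize_mul_stabOrder M c) (two_le a (by simp)) hle₁ hle₂
      (by omega)
    have cover' (T : X) (hT : 2 ≤ stabOrder M T) : stabOrder M T = stabOrder M a ∨
        stabOrder M T = stabOrder M b ∨ stabOrder M T = stabOrder M c ∧ T ∈ orbit M c := by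
      obtain ⟨P, hP, hTP⟩ := cover T hT
      rw [Finset.mem_insert, Finset.mem_insert, Finset.mem_singleton] at hP
      rcases hP with rfl | rfl | rfl <;> simp [stabOrder_eq_of_mem_orbit hTP, hTP]
    rcases hb with ⟨hb, hc⟩ | ⟨hb, hc⟩
    · exact .dihedral c (two_le c (by simp)) hc (fun T hT => by have := cover' T hT; omega)
        fun T hT => by
          rcases cover' T (by omega) with h | h | h
          · omega
          · omega
          · exact h.2
    · exact .polyhedral c hc fun T hT => by have := cover' T hT; omega

theorem exists_riemann_hurwitz_of_ramified {M : Subgroup Γ} {P : X} (hP : 2 ≤ stabOrder M P) :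
    ∃ R : Finset X, (∀ T ∈ R, 2 ≤ stabOrder M T) ∧
      (∀ T, 2 ≤ stabOrder M T → T ∈ orbit M P ∨ ∃ P' ∈ R, T ∈ orbit M P') ∧
      2 * ((Nat.card M : ℤ) - 1) = Nat.card M + orbitSize M P * ((unipOrder U M P : ℤ) - 2) +
        ∑ T ∈ R, ((Nat.card M : ℤ) + orbitSize M T * ((unipOrder U M T : ℤ) - 2)) := by
  classical
  obtain ⟨R, two_le, cover, hsum⟩ := Z.exists_riemann_hurwitz M
  obtain ⟨P₁, hP₁, hPP₁⟩ := cover P hP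
  simp only [orbitSize_mul_ramification] at hsum
  refine ⟨R.erase P₁, fun T hT => two_le T (Finset.mem_of_mem_erase hT), fun T hT => ?_, ?_⟩
  · obtain ⟨P', hP', hTP'⟩ := cover T hT
    by_cases h : P' = P₁
    · exact Or.inl (orbit_eq_iff.2 hPP₁ ▸ h ▸ hTP')
    · exact Or.inr ⟨P', Finset.mem_erase.2 ⟨h, hP'⟩, hTP'⟩
  · rw [hsum, orbitSize_eq_of_mem_orbit hPP₁, Z.unipOrder_eq_of_mem_orbit hPP₁]
    exact (Finset.add_sum_erase R (fun T => (Nat.card M : ℤ) + orbitSize M T *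
      ((unipOrder U M T : ℤ) - 2)) hP₁).symm

theorem two_le_stabOrder_of_two_le_unipOrder {M : Subgroup Γ} {P : X}
    (hP : 2 ≤ unipOrder U M P) : 2 ≤ stabOrder M P := by
  rw [Z.stabOrder_eq_mul]
  exact hP.trans (Nat.le_mul_of_pos_right _ (torusOrder_pos M P))

theorem unipotent_class_equation {M : Subgroup Γ} {P : X} (hP : 2 ≤ unipOrder U M P)
    (hMP : ¬ M ≤ stabilizer Γ P) :
    ∃ T : X, unipOrder U M T = 1 ∧ 2 ≤ stabOrder M T ∧
      (∀ T', 2 ≤ stabOrder M T' → T' ∈ orbit M P ∨ T' ∈ orbit M T) ∧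
      (orbitSize M T : ℤ) = orbitSize M P * ((unipOrder U M P : ℤ) - 2) + 2 := by
  have two_le_stab := Z.two_le_stabOrder_of_two_le_unipOrder hP
  obtain ⟨R, two_le, cover, hsum⟩ := Z.exists_riemann_hurwitz_of_ramified two_le_stab
  have hle : R.card • (Nat.card M : ℤ) ≤ ∑ T ∈ R,
      2 * ((Nat.card M : ℤ) + orbitSize M T * ((unipOrder U M T : ℤ) - 2)) :=
    Finset.card_nsmul_le_sum _ _ _ fun T hT => card_le_two_mul_ramification (two_le T hT)
  rw [← Finset.mul_sum, nsmul_eq_mul] at hle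
  have card_pos : (0 : ℤ) < Nat.card M := by exact_mod_cast Nat.card_pos
  have hq : (2 : ℤ) ≤ unipOrder U M P := by exact_mod_cast hP
  have hn : (2 : ℤ) ≤ orbitSize M P := by
    have := orbitSize_pos M P
    have : orbitSize M P ≠ 1 := fun h => hMP (le_stabilizer_of_orbitSize_eq_one h)
    omega
  have R_le : R.card ≤ 1 := by
    by_contra! hR
    have : (2 : ℤ) ≤ R.card := by exact_mod_cast hR
    nlinarith
  obtain h | h : R.card = 0 ∨ R.card = 1 := by omega
  · rw [Finset.card_eq_zero.1 h, Finset.sum_empty] at hsum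
    have hs : (orbitSize M P : ℤ) * (unipOrder U M P * torusOrder U M P) = Nat.card M := by
      exact_mod_cast Z.stabOrder_eq_mul M P ▸ orbitSize_mul_stabOrder M P
    have hk : (1 : ℤ) ≤ torusOrder U M P := by exact_mod_cast torusOrder_pos M P
    have : (orbitSize M P : ℤ) * unipOrder U M P * 1 ≤
        orbitSize M P * unipOrder U M P * torusOrder U M P := by gcongr
    nlinarith
  · obtain ⟨T, rfl⟩ := Finset.card_eq_one.1 h
    rw [Finset.sum_singleton] at hsum
    have hT : unipOrder U M T = 1 := by
      have := unipOrder_pos (U := U) M T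
      by_contra hne
      have : (2 : ℤ) ≤ unipOrder U M T := by exact_mod_cast (by omega : 2 ≤ unipOrder U M T)
      nlinarith [(orbitSize M T).cast_nonneg (α := ℤ)]
    rw [hT] at hsum
    refine ⟨T, hT, two_le T (by simp), by simpa using cover, ?_⟩
    push_cast at hsum
    linarith

theorem exists_dicksonType {M : Subgroup Γ} {P : X} (hP : 2 ≤ unipOrder U M P)
    (hMP : ¬ M ≤ stabilizer Γ P) :
    ∃ T : X, unipOrder U M T = 1 ∧ 2 ≤ stabOrder M T ∧
      (∀ T', 2 ≤ stabOrder M T' → T' ∈ orbit M P ∨ T' ∈ orbit M T) ∧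
      DicksonType (unipOrder U M P) (torusOrder U M P) (stabOrder M T) (Nat.card M) := by
  obtain ⟨T, hT, hT2, cover, hn⟩ := Z.unipotent_class_equation hP hMP
  have hcard := orbitSize_mul_stabOrder M P
  rw [Z.stabOrder_eq_mul] at hcard
  obtain ⟨m, hm⟩ := Z.unipOrder_dvd_orbitSize_sub_one M P
  have := orbitSize_pos M P
  have hm_pos : 1 ≤ m := by
    by_contra! h
    obtain rfl : m = 0 := by omega
    exact hMP (le_stabilizer_of_orbitSize_eq_one (by omega))
  exact ⟨T, hT, hT2, cover, dicksonType_of_orbitSizes hcard (orbitSize_mul_stabOrder M T) hP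
    (by omega) hm_pos (Z.torusOrder_dvd_unipOrder_sub_one M P) (torusOrder_pos M P) hn⟩

end IsMobiusAction

end Classification

section Generation

variable {Γ X K : Type*} [Group Γ] [MulAction Γ X] [Field K] {U : X → Subgroup Γ}
  {L M : Subgroup Γ} {P : X}

theorem exists_mem_orbit_of_three_le_orbitSize (h : 3 ≤ orbitSize M P) (A B : X) :
    ∃ R ∈ orbit M P, R ≠ A ∧ R ≠ B := by
  by_contra! hR
  have hsub : orbit M P ⊆ {A, B} := fun R hRP => or_iff_not_imp_left.2 (hR R hRP)
  have hle : orbitSize M P ≤ 2 :=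
    (Set.ncard_le_ncard hsub).trans ((Set.ncard_insert_le _ _).trans (by simp))
  omega

section Finite

variable [Finite Γ]

theorem three_le_orbitSize {A B C : X} (hAB : A ≠ B) (hAC : A ≠ C) (hBC : B ≠ C)
    (hA : A ∈ orbit M P) (hB : B ∈ orbit M P) (hC : C ∈ orbit M P) : 3 ≤ orbitSize M P := by
  rw [← Set.ncard_eq_three.2 ⟨A, B, C, hAB, hAC, hBC, rfl⟩]
  refine Set.ncard_le_ncard ?_ (Set.finite_range _)
  rintro T (rfl | rfl | rfl) <;> assumption

theorem orbitSize_eq_two_of_card {s : ℕ} (hs : stabOrder M P = s) (h : Nat.card M = 2 * s) :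
    orbitSize M P = 2 := by
  subst hs
  exact Nat.eq_of_mul_eq_mul_right (stabOrder_pos M P) ((orbitSize_mul_stabOrder M P).trans h)

end Finite

namespace SemisimpleType

variable [Finite Γ]

theorem isPolyhedral_of_three_points (h : SemisimpleType X L) {A B C : X} (hAB : A ≠ B)
    (hAC : A ≠ C) (hBC : B ≠ C) (hA : 3 ≤ stabOrder L A) (hB : 3 ≤ stabOrder L B)
    (hC : 3 ≤ stabOrder L C) (not_fixed : ∀ T : X, ¬ L ≤ stabilizer Γ T) :
    ∃ T : X, IsPolyhedral (stabOrder L T) (Nat.card L) ∧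
      (stabOrder L A = 3 ∨ stabOrder L A = stabOrder L T) := by
  rcases h with rfl | ⟨T, hT⟩ | ⟨T, -, card_eq, -, mem_orbit⟩ | ⟨T, hpoly, hs⟩
  · exact absurd bot_le (not_fixed A)
  · exact absurd hT (not_fixed T)
  · have := three_le_orbitSize hAB hAC hBC (mem_orbit A hA) (mem_orbit B hB) (mem_orbit C hC)
    have := orbitSize_eq_two_of_card rfl card_eq
    omega
  · exact ⟨T, hpoly, (hs A (by omega)).resolve_left (by omega)⟩

end SemisimpleType

namespace IsMobiusAction

variable (Z : IsMobiusAction K U)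

include Z

theorem exists_zpowers_eq_inf_stabilizer [Finite Γ] (h : unipOrder U M P = 1) :
    ∃ x, M ⊓ stabilizer Γ P = Subgroup.zpowers x := by
  obtain ⟨χ, hχ⟩ := Z.exists_character P
  let f : ↥(M ⊓ stabilizer Γ P) →* Kˣ := χ.comp (Subgroup.inclusion inf_le_right)
  have f_injective : Function.Injective f := (injective_iff_map_eq_one f).2 fun a ha =>
    Subtype.ext (eq_one_of_unipOrder_eq_one h a.2.1 ((hχ _).1 ha))
  have : IsCyclic ↥(M ⊓ stabilizer Γ P) :=
    isCyclic_of_injective_ringHom ((Units.coeHom K).comp f)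
      (Units.val_injective.comp f_injective)
  obtain ⟨x, hx⟩ := (Subgroup.isCyclic_iff_exists_zpowers_eq_top _).1 this
  exact ⟨x, hx.symm⟩

theorem not_closure_pair_le_stabilizer {x y : Γ} {P' R : X}
    (hx : M ⊓ stabilizer Γ P = Subgroup.zpowers x) (hx' : M ⊓ stabilizer Γ P' = Subgroup.zpowers x)
    (hfix : ∀ T, x • T = T → T = P ∨ T = P') (hy : M ⊓ stabilizer Γ R = Subgroup.zpowers y)
    (hy1 : y ≠ 1) (hne : P' ≠ P) (hRP : R ≠ P) (hRP' : R ≠ P') (T : X) :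
    ¬ Subgroup.closure {x, y} ≤ stabilizer Γ T := fun hT => by
  obtain ⟨hyM, hyR⟩ := mem_of_inf_stabilizer_eq_zpowers hy
  have hyx : y ∈ Subgroup.zpowers x := by
    rcases hfix T (hT (left_mem_closure_pair x y)) with rfl | rfl
    · exact hx ▸ ⟨hyM, hT (right_mem_closure_pair x y)⟩
    · exact hx' ▸ ⟨hyM, hT (right_mem_closure_pair x y)⟩
  exact hy1 (Z.eq_one_of_three_fixed y P P' R hne.symm hRP.symm hRP'.symm
    (smul_eq_of_mem_zpowers hyx (mem_of_inf_stabilizer_eq_zpowers hx).2)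
    (smul_eq_of_mem_zpowers hyx (mem_of_inf_stabilizer_eq_zpowers hx').2) hyR)

variable [Finite Γ]

theorem exists_orderOf_eq_torusOrder (M : Subgroup Γ) (P : X) :
    ∃ y ∈ M, y • P = P ∧ orderOf y = torusOrder U M P := by
  obtain ⟨χ, hχ⟩ := Z.exists_character P
  let f : ↥(M ⊓ stabilizer Γ P) →* Kˣ := χ.comp (Subgroup.inclusion inf_le_right)
  have f_ker : f.ker = (U P).subgroupOf (M ⊓ stabilizer Γ P) := by
    ext a
    exact hχ _
  have card_range : Nat.card f.range = torusOrder U M P := by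
    rw [torusOrder, Subgroup.relIndex, ← f_ker, Subgroup.index_ker]
  have : Finite f.range := Set.finite_range f
  have : IsCyclic f.range := isCyclic_of_injective_ringHom
    ((Units.coeHom K).comp f.range.subtype) (Units.val_injective.comp Subtype.val_injective)
  obtain ⟨⟨_, z, rfl⟩, hz⟩ := IsCyclic.exists_ofOrder_eq_natCard (α := f.range)
  obtain ⟨c, hc⟩ : torusOrder U M P ∣ orderOf (z : Γ) := by
    rw [← card_range, ← hz, ← Subgroup.orderOf_coe, Subgroup.orderOf_coe z]
    exact orderOf_map_dvd f z
  have hc0 : c ≠ 0 := fun h => (orderOf_pos (z : Γ)).ne' (by rw [hc, h, mul_zero])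
  refine ⟨(z : Γ) ^ c, pow_mem z.2.1 c, pow_mem (S := stabilizer Γ P) z.2.2 c, ?_⟩
  rw [orderOf_pow_of_dvd hc0 (hc ▸ Dvd.intro_left _ rfl), hc,
    Nat.mul_div_cancel _ (Nat.pos_of_ne_zero hc0)]

theorem exists_closure_pair_eq_of_dihedral (hM : unipOrder U M P = 1)
    (card_eq : Nat.card M = 2 * stabOrder M P) : ∃ x y, Subgroup.closure {x, y} = M := by
  obtain ⟨x, hx⟩ := Z.exists_zpowers_eq_inf_stabilizer hM
  have := stabOrder_pos M P
  obtain ⟨y, hyM, hy⟩ : ∃ y ∈ M, y ∉ stabilizer Γ P := by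
    by_contra! hne
    have : stabOrder M P = Nat.card M := by rw [stabOrder, inf_eq_left.2 hne]
    omega
  have hle := closure_pair_le (mem_of_inf_stabilizer_eq_zpowers hx).1 hyM
  refine ⟨x, y, Subgroup.eq_of_le_of_card_ge hle ?_⟩
  have hstab := stabOrder_eq_of_le hle hx (left_mem_closure_pair x y)
  have orbitSize_ne : orbitSize (Subgroup.closure {x, y}) P ≠ 1 := fun h =>
    hy (le_stabilizer_of_orbitSize_eq_one h (right_mem_closure_pair x y))
  have := orbitSize_pos (Subgroup.closure {x, y}) P
  rw [card_eq, ← orbitSize_mul_stabOrder _ P, hstab]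
  exact Nat.mul_le_mul_right _ (by omega)

theorem exists_opposite_point (hM : ∀ T, unipOrder U M T = 1) {x : Γ}
    (hx : M ⊓ stabilizer Γ P = Subgroup.zpowers x) (two_le : 2 ≤ stabOrder M P)
    (stabOrder_le : ∀ T : X, 2 ≤ stabOrder M T → stabOrder M T ≤ stabOrder M P) :
    ∃ P', P' ≠ P ∧ M ⊓ stabilizer Γ P' = Subgroup.zpowers x ∧
      ∀ T, x • T = T → T = P ∨ T = P' := by
  obtain ⟨hxM, hxP⟩ := mem_of_inf_stabilizer_eq_zpowers hx
  have hx1 : x ≠ 1 := ne_one_of_two_le_stabOrder hx two_le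
  obtain ⟨P', hne, hfix⟩ := Z.exists_second_fixed hx1 hxP
    fun hU => hx1 (eq_one_of_unipOrder_eq_one (hM P) hxM hU)
  have hxP' : x • P' = P' := (hfix P').2 (Or.inr rfl)
  refine ⟨P', hne, (Subgroup.eq_of_le_of_card_ge ?_ ?_).symm, fun T => (hfix T).1⟩
  · exact (Subgroup.zpowers_le).2 ⟨hxM, hxP'⟩
  · rw [Nat.card_zpowers, orderOf_eq_stabOrder hx]
    exact stabOrder_le P' (two_le_stabOrder_iff.2 ⟨x, hxM, hx1, hxP'⟩)

/-- The generators are generators of the stabilizers of two points that are not opposite. -/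
theorem exists_closure_pair_eq_of_polyhedral (hM : ∀ T, unipOrder U M T = 1)
    (hpoly : IsPolyhedral (stabOrder M P) (Nat.card M))
    (hs : ∀ T : X, 2 ≤ stabOrder M T → stabOrder M T = 2 ∨ stabOrder M T = 3 ∨
      stabOrder M T = stabOrder M P) : ∃ x y, Subgroup.closure {x, y} = M := by
  have three_le : 3 ≤ stabOrder M P ∧ 4 * stabOrder M P ≤ Nat.card M := by
    unfold IsPolyhedral at hpoly
    omega
  obtain ⟨x, hx⟩ := Z.exists_zpowers_eq_inf_stabilizer (hM P)
  obtain ⟨P', hne, hx', hfix⟩ := Z.exists_opposite_point hM hx (by omega) fun T hT => by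
    have := hs T hT
    omega
  have three_le_orbit : 3 ≤ orbitSize M P := by
    have := orbitSize_mul_stabOrder M P
    have := stabOrder_pos M P
    nlinarith
  obtain ⟨R, hR, hRP, hRP'⟩ := exists_mem_orbit_of_three_le_orbitSize three_le_orbit P P'
  obtain ⟨y, hy⟩ := Z.exists_zpowers_eq_inf_stabilizer (hM R)
  have sR := stabOrder_eq_of_mem_orbit hR
  have hle := closure_pair_le (mem_of_inf_stabilizer_eq_zpowers hx).1
    (mem_of_inf_stabilizer_eq_zpowers hy).1
  refine ⟨x, y, Subgroup.eq_of_le_of_card_ge hle ?_⟩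
  have hxL := left_mem_closure_pair x y
  have hyL := right_mem_closure_pair x y
  have sP := stabOrder_eq_of_le hle hx hxL
  have sP' := stabOrder_eq_of_le hle hx' hxL
  have sR' := stabOrder_eq_of_le hle hy hyL
  rw [← orderOf_eq_stabOrder hx', orderOf_eq_stabOrder hx] at sP'
  obtain ⟨T, hTpoly, hT⟩ := (Z.semisimpleType fun T => unipOrder_eq_one_of_le hle
    (hM T)).isPolyhedral_of_three_points hne.symm hRP.symm hRP'.symm (by omega) (by omega)
    (by omega) (Z.not_closure_pair_le_stabilizer hx hx' hfix hy
      (ne_one_of_two_le_stabOrder hy (by omega)) hne hRP hRP')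
  have := stabOrder_le_of_le hle T
  have := hs T
  unfold IsPolyhedral at hpoly hTpoly
  omega

theorem exists_closure_pair_eq_of_semisimple (hM : ∀ T, unipOrder U M T = 1) :
    ∃ x y, Subgroup.closure {x, y} = M := by
  rcases Z.semisimpleType hM with rfl | ⟨P, h⟩ | ⟨P, -, card_eq, -, -⟩ | ⟨P, hpoly, hs⟩
  · exact ⟨1, 1, by simp⟩
  · obtain ⟨x, hx⟩ := Z.exists_zpowers_eq_inf_stabilizer (hM P)
    rw [inf_eq_left.2 h] at hx
    exact ⟨x, x, by rw [hx, Set.pair_eq_singleton, Subgroup.zpowers_eq_closure]⟩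
  · exact Z.exists_closure_pair_eq_of_dihedral (hM P) card_eq
  · exact Z.exists_closure_pair_eq_of_polyhedral hM hpoly hs

end IsMobiusAction

end Generation

section UnipotentGeneration

variable {Γ X K : Type*} [Group Γ] [MulAction Γ X] [Field K] {U : X → Subgroup Γ}
  {L M : Subgroup Γ} {P T : X} {x y : Γ}

theorem smul_smul_eq_of_orbitSize_eq_two [Finite Γ] (h : orbitSize M P = 2) (hx : x ∈ M)
    (hy : y ∈ M) (hxP : x • P = P) (hyP : y • P ≠ P) : x • y • P = y • P := by
  by_contra hne
  have hxyP : P ≠ x • y • P := fun h => hyP (smul_left_cancel x (hxP.trans h)).symm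
  have := three_le_orbitSize hyP.symm hxyP (Ne.symm hne) (mem_orbit_self P) ⟨⟨y, hy⟩, rfl⟩
    ⟨⟨x, hx⟩ * ⟨y, hy⟩, mul_smul x y P⟩
  omega

theorem DicksonType.eq_of_dvd_nine {q k g : ℕ} (h : DicksonType q k 5 g) (hq : q ∣ 9)
    (hqk : q * k ≠ 6) : g = 360 := by
  rcases h with ⟨rfl, -, -, -, -⟩ | ⟨e, rfl | rfl, -, hk, hs, rfl⟩ | ⟨rfl, rfl, -, -⟩
  · omega
  · rw [(by omega : q = 4)] at hq
    omega
  · rw [(by omega : q = 9), (by omega : k = 4)]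
  · omega

namespace IsMobiusAction

variable (Z : IsMobiusAction K U)

include Z

theorem unipOrder_zpowers_eq_one (hPT : P ≠ T) (hxT : x • T = T) :
    unipOrder U (Subgroup.zpowers x) P = 1 := by
  refine Subgroup.card_eq_one.2 (eq_bot_iff.2 fun z hz => ?_)
  by_contra hz1
  exact hPT (Z.eq_of_smul_eq hz.2 hz1 (smul_eq_of_mem_zpowers hz.1 hxT)).symm

theorem smul_injOn_unip (hPT : P ≠ T) {y₁ y₂ : Γ} (h₁ : y₁ ∈ U P) (h₂ : y₂ ∈ U P)
    (h : y₁ • T = y₂ • T) : y₁ = y₂ := by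
  by_contra hne
  refine hPT (Z.eq_of_smul_eq (mul_mem (inv_mem h₂) h₁) (fun h => hne (inv_mul_eq_one.1 h).symm)
    ?_).symm
  rw [mul_smul, h, inv_smul_smul]

variable [Finite Γ]

theorem stabOrder_le_torusOrder (hx : M ⊓ stabilizer Γ T = Subgroup.zpowers x) (hPT : P ≠ T)
    (hxP : x • P = P) : stabOrder M T ≤ torusOrder U M P := by
  obtain ⟨hxM, hxT⟩ := mem_of_inf_stabilizer_eq_zpowers hx
  have hle : Subgroup.zpowers x ≤ stabilizer Γ P := Subgroup.zpowers_le.2 hxP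
  have hstab : stabOrder (Subgroup.zpowers x) P = orderOf x := by
    rw [stabOrder, inf_eq_left.2 hle, Nat.card_zpowers]
  rw [Z.stabOrder_eq_mul, Z.unipOrder_zpowers_eq_one hPT hxT, one_mul] at hstab
  rw [← orderOf_eq_stabOrder hx, ← hstab]
  exact torusOrder_mono (Subgroup.zpowers_le.2 hxM) P

theorem dicksonType_of_le (hle : L ≤ M) (hT : unipOrder U M T = 1)
    (hx : M ⊓ stabilizer Γ T = Subgroup.zpowers x) (hxL : x ∈ L) (hP : 2 ≤ unipOrder U L P)
    (torus_lt : torusOrder U M P < stabOrder M T) :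
    DicksonType (unipOrder U L P) (torusOrder U L P) (stabOrder M T) (Nat.card L) ∧
      ∀ T', 2 ≤ stabOrder L T' → T' ∈ orbit L P ∨ T' ∈ orbit L T := by
  have hLT : unipOrder U L T = 1 := unipOrder_eq_one_of_le hle hT
  have hPT : P ≠ T := by rintro rfl; omega
  have not_fixed : ¬ L ≤ stabilizer Γ P := fun h =>
    (Z.stabOrder_le_torusOrder hx hPT (h hxL)).not_gt torus_lt
  obtain ⟨T₁, -, -, cover, hD⟩ := Z.exists_dicksonType hP not_fixed
  have sT := stabOrder_eq_of_le hle hx hxL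
  have := torusOrder_pos (U := U) M P
  have hTT₁ : T ∈ orbit L T₁ := by
    refine (cover T (by omega)).resolve_left fun h => ?_
    rw [Z.unipOrder_eq_of_mem_orbit h] at hLT
    omega
  rw [← stabOrder_eq_of_mem_orbit hTT₁, sT] at hD
  exact ⟨hD, orbit_eq_iff.2 hTT₁ ▸ cover⟩

theorem closure_pair_eq_or_smul_smul_eq (hT : unipOrder U M T = 1)
    (hx : M ⊓ stabilizer Γ T = Subgroup.zpowers x)
    (hD : DicksonType (unipOrder U M P) (torusOrder U M P) (stabOrder M T) (Nat.card M))
    (hex : ¬ (unipOrder U M P = 9 ∧ torusOrder U M P = 4 ∧ stabOrder M T = 5 ∧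
      Nat.card M = 360)) (hyM : y ∈ M) (hyP : y ∈ U P) (hy1 : y ≠ 1) :
    Subgroup.closure {x, y} = M ∨
      (3 ≤ unipOrder U M P ∧ y • T ≠ T ∧ x • y • T = y • T) := by
  obtain ⟨hxM, hxT⟩ := mem_of_inf_stabilizer_eq_zpowers hx
  have hle := closure_pair_le hxM hyM
  have hxL := left_mem_closure_pair x y
  have hyL := right_mem_closure_pair x y
  obtain ⟨hDL, -⟩ := Z.dicksonType_of_le hle hT hx hxL
    (two_le_unipOrder_iff.2 ⟨y, hyL, hy1, hyP⟩) hD.torus_lt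
  rcases hD.eq_or_dihedral_or_exceptional hDL (unipOrder_dvd_of_le hle P) with h | ⟨h3, h⟩ | h
  · exact Or.inl (Subgroup.eq_of_le_of_card_ge hle h.ge)
  · have hPT : P ≠ T := by rintro rfl; omega
    have hyT : y • T ≠ T := fun h => hPT (Z.eq_of_smul_eq hyP hy1 h).symm
    exact Or.inr ⟨h3, hyT, smul_smul_eq_of_orbitSize_eq_two
      (orbitSize_eq_two_of_card (stabOrder_eq_of_le hle hx hxL) h) hxL hyL hxT hyT⟩
  · exact absurd h hex

/-- For a nontrivial `y ∈ M ⊓ U P`, if `x` and `y` generate a proper subgroup, then `y` moves `T`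
to the second fixed point of `x`, so that only one `y` is excluded. -/
theorem exists_closure_pair_eq_of_not_exceptional (hT : unipOrder U M T = 1)
    (hx : M ⊓ stabilizer Γ T = Subgroup.zpowers x) (hP : 2 ≤ unipOrder U M P)
    (hD : DicksonType (unipOrder U M P) (torusOrder U M P) (stabOrder M T) (Nat.card M))
    (hex : ¬ (unipOrder U M P = 9 ∧ torusOrder U M P = 4 ∧ stabOrder M T = 5 ∧
      Nat.card M = 360)) :
    ∃ y ∈ M, y ∈ U P ∧ Subgroup.closure {x, y} = M := by
  have := hD.torus_lt
  have := torusOrder_pos (U := U) M P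
  have hx1 : x ≠ 1 := ne_one_of_two_le_stabOrder hx (by omega)
  have hPT : P ≠ T := by rintro rfl; omega
  obtain ⟨y₁, hy₁M, hy₁, hy₁P⟩ := two_le_unipOrder_iff.1 hP
  rcases Z.closure_pair_eq_or_smul_smul_eq hT hx hD hex hy₁M hy₁P hy₁ with
    h | ⟨three_le, hT₁, hxT₁⟩
  · exact ⟨y₁, hy₁M, hy₁P, h⟩
  obtain ⟨y₂, ⟨hy₂M, hy₂P⟩, hy₂⟩ : ∃ y ∈ (M ⊓ U P : Subgroup Γ), y ∉ ({1, y₁} : Set Γ) := by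
    by_contra! h
    have hle : unipOrder U M P ≤ ({1, y₁} : Set Γ).ncard := Set.ncard_le_ncard h
    have := hle.trans (Set.ncard_insert_le _ _)
    rw [Set.ncard_singleton] at this
    omega
  obtain ⟨hy₂1, hne⟩ : y₂ ≠ 1 ∧ y₂ ≠ y₁ := by simpa using hy₂
  rcases Z.closure_pair_eq_or_smul_smul_eq hT hx hD hex hy₂M hy₂P hy₂1 with
    h | ⟨-, hT₂, hxT₂⟩
  · exact ⟨y₂, hy₂M, hy₂P, h⟩
  · exact absurd (Z.eq_one_of_three_fixed x T (y₁ • T) (y₂ • T) hT₁.symm hT₂.symm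
      (fun h => hne (Z.smul_injOn_unip hPT hy₁P hy₂P h).symm)
      (mem_of_inf_stabilizer_eq_zpowers hx).2 hxT₁ hxT₂) hx1

theorem not_semisimple_of_exceptional (hle : L ≤ M)
    (hM : ∀ A : X, 2 ≤ stabOrder M A → stabOrder M A = 36 ∨ stabOrder M A = 5)
    (sT : stabOrder L T = 5) (sP : 4 ∣ stabOrder L P) : ¬ ∀ A, unipOrder U L A = 1 := by
  intro hL
  have := stabOrder_pos L P
  have := Nat.le_of_dvd this sP
  have hdvd (h : stabOrder L T = stabOrder L P) : False := by omega
  rcases Z.semisimpleType hL with rfl | ⟨A, hA⟩ | ⟨A, -, -, hs, -⟩ | ⟨A, -, hs⟩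
  · rw [stabOrder, bot_inf_eq, Subgroup.card_bot] at sT
    omega
  · have hcard : stabOrder L A = Nat.card L := by rw [stabOrder, inf_eq_left.2 hA]
    have hTA : 5 ∣ stabOrder L A := hcard ▸ sT ▸ stabOrder_dvd_card L T
    have hPA : 4 ∣ stabOrder L A := hcard ▸ sP.trans (stabOrder_dvd_card L P)
    have hLM := stabOrder_dvd_of_le hle A
    have := Nat.le_of_dvd (stabOrder_pos L A) hTA
    have := stabOrder_le_of_le hle A
    have hTM := hTA.trans hLM
    have hPM := hPA.trans hLM
    rcases hM A (by omega) with h | h <;> rw [h] at hTM hPM <;> omega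
  · have := hs T (by omega)
    have := hs P (by omega)
    omega
  · have := hs T (by omega)
    have := hs P (by omega)
    omega

theorem exists_unipotent_of_exceptional (hle : L ≤ M) (hT : unipOrder U M T = 1)
    (cover : ∀ T', 2 ≤ stabOrder M T' → T' ∈ orbit M P ∨ T' ∈ orbit M T)
    (hq : unipOrder U M P = 9) (hk : torusOrder U M P = 4) (hs : stabOrder M T = 5)
    (sT : stabOrder L T = 5) (sP : 4 ∣ stabOrder L P) :
    ∃ A, 2 ≤ unipOrder U L A ∧ unipOrder U M A = 9 ∧ torusOrder U M A = 4 := by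
  have sMP : stabOrder M P = 36 := by rw [Z.stabOrder_eq_mul, hq, hk]
  obtain ⟨A, hA⟩ := not_forall.1 (Z.not_semisimple_of_exceptional hle
    (fun A hA => (cover A hA).imp (fun h => (stabOrder_eq_of_mem_orbit h).trans sMP)
      fun h => (stabOrder_eq_of_mem_orbit h).trans hs) sT sP)
  have := unipOrder_pos (U := U) L A
  have hA2 : 2 ≤ unipOrder U L A := by omega
  have hAP : A ∈ orbit M P := by
    have := stabOrder_le_of_le hle A
    have := Z.two_le_stabOrder_of_two_le_unipOrder hA2
    exact (cover A (by omega)).resolve_right fun h => hA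
      (unipOrder_eq_one_of_le hle ((Z.unipOrder_eq_of_mem_orbit h).trans hT))
  have qA := (Z.unipOrder_eq_of_mem_orbit hAP).trans hq
  refine ⟨A, hA2, qA, ?_⟩
  have := Z.stabOrder_eq_mul M A
  rw [stabOrder_eq_of_mem_orbit hAP, sMP, qA] at this
  omega

/-- The group is the alternating group of degree six, in which a unipotent of order three and an
element of order five may well generate an icosahedral subgroup; one replaces the unipotent by an
element of order four. -/
theorem exists_closure_pair_eq_of_exceptional (hT : unipOrder U M T = 1)
    (hx : M ⊓ stabilizer Γ T = Subgroup.zpowers x)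
    (cover : ∀ T', 2 ≤ stabOrder M T' → T' ∈ orbit M P ∨ T' ∈ orbit M T)
    (hq : unipOrder U M P = 9) (hk : torusOrder U M P = 4) (hs : stabOrder M T = 5)
    (hcard : Nat.card M = 360) :
    ∃ y ∈ M, orderOf y = 4 ∧ Subgroup.closure {x, y} = M := by
  obtain ⟨y, hyM, hyP, hy⟩ := Z.exists_orderOf_eq_torusOrder M P
  rw [hk] at hy
  refine ⟨y, hyM, hy, ?_⟩
  have hle := closure_pair_le (mem_of_inf_stabilizer_eq_zpowers hx).1 hyM
  have hxL := left_mem_closure_pair x y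
  have hyL := right_mem_closure_pair x y
  refine Subgroup.eq_of_le_of_card_ge hle ?_
  set L := Subgroup.closure {x, y}
  have sT := (stabOrder_eq_of_le hle hx hxL).trans hs
  have sP : 4 ∣ stabOrder L P := by
    rw [← hy, ← Nat.card_zpowers]
    exact Subgroup.card_dvd_of_le (Subgroup.zpowers_le.2 (Subgroup.mem_inf.2 ⟨hyL, hyP⟩))
  have sP_le := Nat.le_of_dvd (stabOrder_pos L P) sP
  obtain ⟨A, hA, qA, kA⟩ := Z.exists_unipotent_of_exceptional hle hT cover hq hk hs sT sP
  obtain ⟨hD, coverL⟩ := Z.dicksonType_of_le hle hT hx hxL hA (by omega)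
  have sA := Z.stabOrder_eq_mul L A
  have sP_eq : stabOrder L P = stabOrder L A ∨ stabOrder L P = 5 :=
    (coverL P (by omega)).imp stabOrder_eq_of_mem_orbit fun h =>
      (stabOrder_eq_of_mem_orbit h).trans sT
  rw [hs] at hD
  exact (hcard.trans (hD.eq_of_dvd_nine (qA ▸ unipOrder_dvd_of_le hle A) (by omega)).symm).le

theorem exists_closure_pair_eq_coprime (hP : 2 ≤ unipOrder U M P)
    (hMP : ¬ M ≤ stabilizer Γ P) :
    ∃ x y, Subgroup.closure {x, y} = M ∧ (orderOf x).Coprime (orderOf y) := by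
  obtain ⟨T, hT, -, cover, hD⟩ := Z.exists_dicksonType hP hMP
  obtain ⟨x, hx⟩ := Z.exists_zpowers_eq_inf_stabilizer hT
  by_cases hex : unipOrder U M P = 9 ∧ torusOrder U M P = 4 ∧ stabOrder M T = 5 ∧
      Nat.card M = 360
  · obtain ⟨hq, hk, hs, hg⟩ := hex
    obtain ⟨y, -, hy, h⟩ := Z.exists_closure_pair_eq_of_exceptional hT hx cover hq hk hs hg
    exact ⟨x, y, h, by rw [orderOf_eq_stabOrder hx, hs, hy]; norm_num⟩
  · obtain ⟨y, hyM, hyP, h⟩ := Z.exists_closure_pair_eq_of_not_exceptional hT hx hP hD hex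
    refine ⟨x, y, h, ?_⟩
    rw [orderOf_eq_stabOrder hx, ← Nat.card_zpowers]
    exact hD.coprime.coprime_dvd_right
      (Subgroup.card_dvd_of_le (Subgroup.zpowers_le.2 (Subgroup.mem_inf.2 ⟨hyM, hyP⟩)))

theorem exists_closure_pair_eq_or_le_stabilizer (M : Subgroup Γ) :
    (∃ x y, Subgroup.closure {x, y} = M) ∨ ∃ P, M ≤ stabilizer Γ P ∧ M ⊓ U P ≠ ⊥ := by
  by_cases h : ∀ T, unipOrder U M T = 1
  · exact Or.inl (Z.exists_closure_pair_eq_of_semisimple h)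
  obtain ⟨P, hP⟩ := not_forall.1 h
  by_cases hMP : M ≤ stabilizer Γ P
  · exact Or.inr ⟨P, hMP, fun h => hP (Subgroup.card_eq_one.2 h)⟩
  · have := unipOrder_pos (U := U) M P
    obtain ⟨x, y, h, -⟩ := Z.exists_closure_pair_eq_coprime (by omega) hMP
    exact Or.inl ⟨x, y, h⟩

end IsMobiusAction

end UnipotentGeneration

section Transfer

variable {Γ Γ' X K : Type*} [Group Γ] [Group Γ'] [MulAction Γ X] [MulAction Γ' X] [Field K]

/-- The subgroups conjugate to the kernel of a character of the stabilizer of a base point `o`, for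
a choice `s P` of elements taking `o` to the points `P`: the unipotent subgroups of a transitive
Möbius action. -/
def conjKer {o : X} (χ : stabilizer Γ o →* Kˣ) (s : X → Γ) (P : X) : Subgroup Γ :=
  (χ.ker.map (stabilizer Γ o).subtype).comap (MulAut.conj (s P)⁻¹).toMonoidHom

theorem mem_conjKer {o : X} {χ : stabilizer Γ o →* Kˣ} {s : X → Γ} {P : X} {g : Γ} :
    g ∈ conjKer χ s P ↔ ∃ h : (s P)⁻¹ * g * s P ∈ stabilizer Γ o, χ ⟨_, h⟩ = 1 := by
  simp [conjKer, MonoidHom.mem_ker]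

theorem mem_conjKer_iff_fixed {o : X} {s : X → Γ} (hs : ∀ P, s P • o = P)
    {χ : stabilizer Γ o →* Kˣ}
    (map_eq_one_iff : ∀ g, χ g = 1 ↔ g = 1 ∨ ∀ R, (g : Γ) • R = R → R = o) {g : Γ} {P : X} :
    g ∈ conjKer χ s P ↔ g = 1 ∨ g • P = P ∧ ∀ R, g • R = R → R = P := by
  have hfix (R : X) : ((s P)⁻¹ * g * s P) • R = R ↔ g • s P • R = s P • R := by
    rw [mul_smul, mul_smul, inv_smul_eq_iff]
  have hmem : (s P)⁻¹ * g * s P ∈ stabilizer Γ o ↔ g • P = P := by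
    rw [mem_stabilizer_iff, hfix, hs]
  have hone : (s P)⁻¹ * g * s P = 1 ↔ g = 1 := by
    rw [mul_assoc, inv_mul_eq_one, eq_comm, mul_eq_right]
  rw [mem_conjKer]
  simp only [map_eq_one_iff, ← Subtype.coe_inj, Subgroup.coe_one, hone, hfix]
  constructor
  · rintro ⟨h, rfl | hu⟩
    · exact .inl rfl
    · refine .inr ⟨hmem.1 h, fun R hR => ?_⟩
      rw [← smul_inv_smul (s P) R] at hR ⊢
      rw [hu _ hR, hs]
  · rintro (rfl | ⟨hP, hu⟩)
    · exact ⟨by simp, .inl rfl⟩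
    · refine ⟨hmem.2 hP, .inr fun R hR => ?_⟩
      rw [← inv_smul_smul (s P) R, hu _ hR, inv_smul_eq_iff, hs]

theorem exists_character_ker_eq_conjKer {o : X} {s : X → Γ} (hs : ∀ P, s P • o = P)
    (χ : stabilizer Γ o →* Kˣ) (P : X) :
    ∃ ψ : stabilizer Γ P →* Kˣ, ∀ g, ψ g = 1 ↔ (g : Γ) ∈ conjKer χ s P := by
  refine ⟨χ.comp (stabilizerEquivStabilizer (hs P).symm).symm.toMonoidHom, fun g => ?_⟩
  rw [mem_conjKer]
  constructor
  · intro h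
    refine ⟨?_, (congrArg χ (Subtype.ext ?_)).trans h⟩
    · rw [mem_stabilizer_iff, mul_smul, mul_smul, hs, g.2, inv_smul_eq_iff, hs]
    · simp [stabilizerEquivStabilizer_symm_apply]
  · rintro ⟨h, hχ⟩
    refine (congrArg χ (Subtype.ext ?_)).trans hχ
    simp [stabilizerEquivStabilizer_symm_apply]

theorem IsMobiusAction.of_base {o : X} {s : X → Γ} (hs : ∀ P, s P • o = P)
    (exists_smul_eq : ∀ g : Γ, ∃ P : X, g • P = P)
    (eq_one : ∀ (g : Γ) (R T : X), o ≠ R → o ≠ T → R ≠ T →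
      g • o = o → g • R = R → g • T = T → g = 1)
    (χ : stabilizer Γ o →* Kˣ)
    (map_eq_one_iff : ∀ g, χ g = 1 ↔ g = 1 ∨ ∀ R, (g : Γ) • R = R → R = o)
    (comm : ∀ a b, χ a = 1 → χ b = 1 → a * b = b * a) :
    IsMobiusAction K (conjKer χ s) where
  exists_smul_eq := exists_smul_eq
  eq_one_of_three_fixed g P R T hPR hPT hRT hP hR hT := by
    have key : (s P)⁻¹ * g * s P = 1 := by
      have hP' : (s P)⁻¹ • P = o := inv_smul_eq_iff.2 (hs P).symm
      refine eq_one _ ((s P)⁻¹ • R) ((s P)⁻¹ • T) ?_ ?_ ((MulAction.injective _).ne hRT) ?_ ?_ ?_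
      · rw [← hP']; exact (MulAction.injective _).ne hPR
      · rw [← hP']; exact (MulAction.injective _).ne hPT
      all_goals simp [mul_smul, hs, hP, hR, hT, hP']
    simpa [mul_assoc, inv_mul_eq_one, eq_comm] using key
  mem_unip_iff _ _ := mem_conjKer_iff_fixed hs map_eq_one_iff
  exists_character P := exists_character_ker_eq_conjKer hs χ P
  unip_comm P a ha b hb := by
    obtain ⟨ha, ha'⟩ := mem_conjKer.1 ha
    obtain ⟨hb, hb'⟩ := mem_conjKer.1 hb
    have := congrArg Subtype.val (comm _ _ ha' hb')
    exact (MulAut.conj (s P)⁻¹).injective (by simpa [mul_assoc] using this)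

theorem IsMobiusAction.comap {U : X → Subgroup Γ'} (Z : IsMobiusAction K U) {f : Γ →* Γ'}
    (hf : Function.Injective f) (smul_eq : ∀ (g : Γ) (P : X), g • P = f g • P) :
    IsMobiusAction K fun P => (U P).comap f where
  exists_smul_eq g := by simpa only [smul_eq] using Z.exists_smul_eq (f g)
  eq_one_of_three_fixed g P R T hPR hPT hRT hP hR hT := by
    rw [smul_eq] at hP hR hT
    exact (map_eq_one_iff f hf).1 (Z.eq_one_of_three_fixed _ P R T hPR hPT hRT hP hR hT)
  mem_unip_iff g P := by
    simp only [Subgroup.mem_comap, Z.mem_unip_iff, map_eq_one_iff f hf, smul_eq]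
  exists_character P := by
    obtain ⟨χ, hχ⟩ := Z.exists_character P
    let f' : stabilizer Γ P →* stabilizer Γ' P :=
      (f.comp (stabilizer Γ P).subtype).codRestrict _ fun g => (smul_eq g P).symm.trans g.2
    exact ⟨χ.comp f', fun g => hχ (f' g)⟩
  unip_comm P a ha b hb :=
    hf (by rw [map_mul, map_mul]; exact Z.unip_comm P _ ha _ hb)

end Transfer

section MobiusGroup

open OnePoint Matrix

/-- `PGL₂(K)`, as the group of Möbius transformations of the projective line over `K`. -/
def mobiusGroup (K : Type*) [Field K] [DecidableEq K] : Subgroup (Equiv.Perm (OnePoint K)) :=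
  (toPermHom (GL (Fin 2) K) (OnePoint K)).range

namespace mobiusGroup

variable {K : Type*} [Field K] [DecidableEq K]

theorem exists_smul_infty_eq (P : OnePoint K) : ∃ s : mobiusGroup K, s • ∞ = P := by
  induction P using OnePoint.rec with
  | infty => exact ⟨1, one_smul _ _⟩
  | coe z =>
    let A : GL (Fin 2) K := GeneralLinearGroup.mkOfDetNeZero !![z, 1; 1, 0] (by simp)
    exact ⟨⟨_, A, rfl⟩, (smul_infty_eq_ite A).trans (by simp [A, GeneralLinearGroup.mkOfDetNeZero])⟩

theorem exists_smul_coe_eq_of_smul_infty {g : mobiusGroup K} (hg : g • (∞ : OnePoint K) = ∞) :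
    ∃ (α : Kˣ) (β : K), ∀ z : K, g • (z : OnePoint K) = ↑(α * z + β) := by
  obtain ⟨_, A, rfl⟩ := g
  have h10 : A 1 0 = 0 := smul_infty_eq_self_iff.1 hg
  obtain ⟨h00, h11⟩ : A 0 0 ≠ 0 ∧ A 1 1 ≠ 0 := by
    simpa [det_fin_two, h10] using A.det_ne_zero
  refine ⟨Units.mk0 _ h00 / Units.mk0 _ h11, A 0 1 / A 1 1, fun z => smul_some_eq_ite.trans ?_⟩
  simp only [h10, zero_mul, zero_add, h11, if_false, coe_eq_coe, Units.val_div_eq_div_val,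
    Units.val_mk0]
  ring

theorem exists_multiplier (g : stabilizer (mobiusGroup K) (∞ : OnePoint K)) :
    ∃ (α : Kˣ) (β : K), ∀ z : K, g • (z : OnePoint K) = ↑(α * z + β) :=
  exists_smul_coe_eq_of_smul_infty g.2

theorem multiplier_unique {g : stabilizer (mobiusGroup K) (∞ : OnePoint K)} {α α' : Kˣ} {β β' : K}
    (h : ∀ z : K, g • (z : OnePoint K) = ↑(α * z + β))
    (h' : ∀ z : K, g • (z : OnePoint K) = ↑(α' * z + β')) : α = α' := by
  have key (z : K) : α * z + β = α' * z + β' := coe_injective ((h z).symm.trans (h' z))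
  ext
  linear_combination key 1 - key 0

/-- The derivative `α` of a Möbius transformation `z ↦ α z + β` fixing `∞`. -/
noncomputable def multiplier : stabilizer (mobiusGroup K) (∞ : OnePoint K) →* Kˣ :=
  MonoidHom.mk' (fun g => (exists_multiplier g).choose) fun g h => by
    obtain ⟨β, hg⟩ := (exists_multiplier g).choose_spec
    obtain ⟨γ, hh⟩ := (exists_multiplier h).choose_spec
    obtain ⟨δ, hgh⟩ := (exists_multiplier (g * h)).choose_spec
    refine multiplier_unique hgh (β' := (exists_multiplier g).choose * γ + β) fun z => ?_
    rw [mul_smul, hh, hg, Units.val_mul, mul_add, mul_assoc, add_assoc]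

theorem exists_smul_coe_eq (g : stabilizer (mobiusGroup K) (∞ : OnePoint K)) :
    ∃ β : K, ∀ z : K, g • (z : OnePoint K) = ↑(multiplier g * z + β) :=
  (exists_multiplier g).choose_spec

theorem eq_of_smul_coe_eq {g h : stabilizer (mobiusGroup K) (∞ : OnePoint K)}
    (hgh : ∀ z : K, g • (z : OnePoint K) = h • (z : OnePoint K)) : g = h := by
  ext P
  induction P using OnePoint.rec with
  | infty => exact g.2.trans h.2.symm
  | coe z => exact hgh z

theorem eq_one_of_fixed {g : stabilizer (mobiusGroup K) (∞ : OnePoint K)} {z w : K} (hzw : z ≠ w)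
    (hz : g • (z : OnePoint K) = z) (hw : g • (w : OnePoint K) = w) : g = 1 := by
  obtain ⟨β, hg⟩ := exists_smul_coe_eq g
  rw [hg, coe_eq_coe] at hz hw
  have hmul : (multiplier g : K) = 1 := by
    refine mul_right_cancel₀ (sub_ne_zero.2 hzw) ?_
    linear_combination hz - hw
  refine eq_of_smul_coe_eq fun t => ?_
  rw [hg, one_smul, coe_eq_coe]
  linear_combination (t - z) * hmul + hz

theorem multiplier_eq_one_iff (g : stabilizer (mobiusGroup K) (∞ : OnePoint K)) :
    multiplier g = 1 ↔ g = 1 ∨ ∀ P : OnePoint K, g • P = P → P = ∞ := by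
  obtain ⟨β, hg⟩ := exists_smul_coe_eq g
  constructor
  · intro hmul
    simp only [hmul, Units.val_one, one_mul] at hg
    refine or_iff_not_imp_right.2 fun h => ?_
    push Not at h
    obtain ⟨P, hP, hP'⟩ := h
    obtain ⟨z, rfl⟩ := ne_infty_iff_exists.1 hP'
    rw [hg, coe_eq_coe, add_eq_left] at hP
    exact eq_of_smul_coe_eq fun t => by rw [hg, one_smul, hP, add_zero]
  · rintro (rfl | h)
    · exact map_one _
    · by_contra hmul
      have hne : 1 - (multiplier g : K) ≠ 0 := by
        rwa [sub_ne_zero, ne_comm, Ne, Units.val_eq_one]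
      refine coe_ne_infty _ (h ((β / (1 - multiplier g) : K) : OnePoint K) ?_)
      rw [hg, coe_eq_coe]
      field_simp
      ring

theorem comm_of_multiplier_eq_one (g h : stabilizer (mobiusGroup K) (∞ : OnePoint K))
    (hg : multiplier g = 1) (hh : multiplier h = 1) : g * h = h * g := by
  obtain ⟨β, hβ⟩ := exists_smul_coe_eq g
  obtain ⟨γ, hγ⟩ := exists_smul_coe_eq h
  refine eq_of_smul_coe_eq fun z => ?_
  simp only [mul_smul, hβ, hγ, hg, hh, Units.val_one, one_mul, add_right_comm]

theorem exists_smul_eq [IsAlgClosed K] (g : mobiusGroup K) : ∃ P : OnePoint K, g • P = P := by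
  obtain ⟨_, A, rfl⟩ := g
  by_cases hc : A 1 0 = 0
  · exact ⟨∞, smul_infty_eq_self_iff.2 hc⟩
  · obtain ⟨z, hz⟩ := IsAlgClosed.exists_aeval_eq_zero K A.fixpointPolynomial (by
      rw [GeneralLinearGroup.fixpointPolynomial, sub_eq_add_neg, ← Polynomial.C_neg,
        Polynomial.degree_quadratic hc]
      decide)
    exact ⟨z, GeneralLinearGroup.fixpointPolynomial_aeval_eq_zero_iff.1 hz⟩

variable (K) in
theorem exists_isMobiusAction [IsAlgClosed K] :
    ∃ U : OnePoint K → Subgroup (mobiusGroup K), IsMobiusAction K U := by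
  choose s hs using exists_smul_infty_eq (K := K)
  refine ⟨_, IsMobiusAction.of_base hs exists_smul_eq (fun g R T hR hT hRT hg hgR hgT => ?_)
    multiplier multiplier_eq_one_iff comm_of_multiplier_eq_one⟩
  obtain ⟨z, rfl⟩ := ne_infty_iff_exists.1 hR.symm
  obtain ⟨w, rfl⟩ := ne_infty_iff_exists.1 hT.symm
  exact congrArg Subtype.val
    (eq_one_of_fixed (g := ⟨g, hg⟩) (fun h => hRT (by rw [h])) hgR hgT)

end mobiusGroup

end MobiusGroup

section ProjectiveLine

open OnePoint Matrix Matrix.SpecialLinearGroup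
open scoped MatrixGroups

theorem exists_eq_sq_sub_sq {F : Type*} [Field F] [Finite F] (x : F) :
    ∃ a b : F, x = a ^ 2 - b ^ 2 := by
  by_cases h2 : ringChar F = 2
  · obtain ⟨a, rfl⟩ := FiniteField.isSquare_of_char_two h2 x
    exact ⟨a, 0, by ring⟩
  · have : (2 : F) ≠ 0 := Ring.two_ne_zero h2
    exact ⟨(x + 1) / 2, (x - 1) / 2, by field_simp; ring⟩

/-- The projective line over the algebraic closure of `F`. Over this line, unlike over the one over
`F` itself, every element of `PSL₂(F)` has a fixed point. -/
abbrev ProjLine (F : Type*) [Field F] := OnePoint (AlgebraicClosure F)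

namespace PSL2

variable {F : Type*} [Field F]

noncomputable local instance : DecidableEq (AlgebraicClosure F) := Classical.decEq _

theorem mem_center_fin_two_iff {A : SL(2, F)} :
    A ∈ Subgroup.center (SL(2, F)) ↔
      A 0 1 = 0 ∧ A 1 0 = 0 ∧ A 0 0 = A 1 1 := by
  rw [mem_center_iff]
  constructor
  · rintro ⟨r, -, h⟩
    simp [← h]
  · rintro ⟨h01, h10, h00⟩
    have hdet := A.det_coe
    rw [det_fin_two, h01, h00] at hdet
    refine ⟨A 1 1, by simp only [Fintype.card_fin]; linear_combination hdet, ?_⟩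
    ext i j
    fin_cases i <;> fin_cases j <;> simp [h01, h10, h00]

theorem toPerm_mapGL_eq_one {A : SL(2, F)}
    (hA : A ∈ Subgroup.center (SL(2, F))) :
    toPermHom (GL (Fin 2) (AlgebraicClosure F)) (ProjLine F) (A.mapGL _) = 1 := by
  obtain ⟨h01, h10, h00⟩ := mem_center_fin_two_iff.1 hA
  have h11 : A 1 1 ≠ 0 := fun h => by
    have hdet := A.det_coe
    rw [det_fin_two, h01, h] at hdet
    simp at hdet
  ext P
  induction P using OnePoint.rec with
  | infty => simp [smul_infty_eq_ite, h10]
  | coe z => simp [smul_some_eq_ite, h01, h10, h00, h11]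

/-- The action of `PSL₂(F)` by Möbius transformations over the algebraic closure of `F`. -/
noncomputable def toMobiusGroup : PSL2 F →* mobiusGroup (AlgebraicClosure F) :=
  QuotientGroup.lift _ ((toPermHom _ _).rangeRestrict.comp
    (mapGL (AlgebraicClosure F))) fun _ hA =>
      Subtype.ext (toPerm_mapGL_eq_one hA)

noncomputable instance : MulAction (PSL2 F) (ProjLine F) := MulAction.compHom _ toMobiusGroup

theorem mk_smul_infty (A : SL(2, F)) :
    (A : PSL2 F) • (∞ : ProjLine F) = if algebraMap F (AlgebraicClosure F) (A 1 0) = 0 then ∞ else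
      ((algebraMap F _ (A 0 0) / algebraMap F _ (A 1 0) : AlgebraicClosure F) : ProjLine F) :=
  smul_infty_eq_ite (A.mapGL (AlgebraicClosure F))

theorem mk_smul_infty_eq_infty_iff {A : SL(2, F)} :
    (A : PSL2 F) • (∞ : ProjLine F) = ∞ ↔ A 1 0 = 0 := by
  simp [mk_smul_infty]

theorem mk_smul_coe_eq_coe_iff {A : SL(2, F)} {z : AlgebraicClosure F} :
    (A : PSL2 F) • (z : ProjLine F) = z ↔ algebraMap F _ (A 1 0) * z ^ 2 +
      (algebraMap F _ (A 1 1) - algebraMap F _ (A 0 0)) * z - algebraMap F _ (A 0 1) = 0 := by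
  refine (GeneralLinearGroup.fixpointPolynomial_aeval_eq_zero_iff
    (g := A.mapGL (AlgebraicClosure F))).symm.trans ?_
  simp [GeneralLinearGroup.fixpointPolynomial]

theorem toMobiusGroup_injective : Function.Injective (toMobiusGroup (F := F)) := by
  refine (injective_iff_map_eq_one _).2 fun g hg => ?_
  obtain ⟨A, rfl⟩ := QuotientGroup.mk_surjective g
  have hfix (P : ProjLine F) : (A : PSL2 F) • P = P := congrArg (· • P) hg
  have h10 := mk_smul_infty_eq_infty_iff.1 (hfix ∞)
  have h01 : A 0 1 = 0 := by
    simpa using mk_smul_coe_eq_coe_iff.1 (hfix ((0 : AlgebraicClosure F) : ProjLine F))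
  have h00 := mk_smul_coe_eq_coe_iff.1 (hfix ((1 : AlgebraicClosure F) : ProjLine F))
  simp only [h10, h01, map_zero, zero_mul, zero_add, mul_one, sub_zero, sub_eq_zero] at h00
  exact (QuotientGroup.eq_one_iff _).2
    (mem_center_fin_two_iff.2 ⟨h01, h10, ((algebraMap F _).injective h00).symm⟩)

/-- The subgroup of all elements of `PSL₂(F)` which are trivial or fix no point but `P`. -/
noncomputable def unip (P : ProjLine F) : Subgroup (PSL2 F) :=
  ((mobiusGroup.exists_isMobiusAction (AlgebraicClosure F)).choose P).comap toMobiusGroup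

theorem isMobiusAction : IsMobiusAction (AlgebraicClosure F) (unip (F := F)) :=
  (mobiusGroup.exists_isMobiusAction (AlgebraicClosure F)).choose_spec.comap
    toMobiusGroup_injective fun _ _ => rfl

/-- The image in `PSL₂(F)` of the matrix `!![1, x; 0, 1]`. -/
def upper (x : F) : PSL2 F :=
  (transvection zero_ne_one x : SL(2, F))

/-- The image in `PSL₂(F)` of the matrix `!![1, 0; x, 1]`. -/
def lower (x : F) : PSL2 F :=
  (transvection one_ne_zero x : SL(2, F))

/-- The image in `PSL₂(F)` of the matrix `!![a, 0; 0, a⁻¹]`. -/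
noncomputable def torus : Fˣ →* PSL2 F :=
  (QuotientGroup.mk' _).comp <| MonoidHom.mk'
    (fun a => diag2 (a : F) a.ne_zero) fun a b => by
      ext i j
      fin_cases i <;> fin_cases j <;> simp [diag2_coe', mul_comm]

/-- The image in `PSL₂(F)` of the matrix `!![0, -1; 1, 0]`. -/
def weyl : PSL2 F :=
  QuotientGroup.mk ⟨!![0, -1; 1, 0], by simp⟩

@[elab_as_elim]
theorem induction_upper_lower {p : PSL2 F → Prop} (g : PSL2 F) (upper : ∀ x, p (upper x))
    (lower : ∀ x, p (lower x)) (mul : ∀ g h, p g → p h → p (g * h)) : p g := by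
  obtain ⟨A, rfl⟩ := QuotientGroup.mk_surjective g
  refine SL2.transvection_induction (fun A => p (A : PSL2 F)) (fun i j hij x => ?_)
    (fun A B hA hB => mul _ _ hA hB) A
  fin_cases i <;> fin_cases j
  · exact absurd rfl hij
  · exact upper x
  · exact lower x
  · exact absurd rfl hij

theorem upper_add (x y : F) : upper (x + y) = upper x * upper y :=
  congrArg _ (transvection_add zero_ne_one x y)

@[simp]
theorem upper_eq_one_iff {x : F} : upper x = 1 ↔ x = 0 :=
  (QuotientGroup.eq_one_iff _).trans (transvection_mem_center_iff zero_ne_one x)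

@[simp]
theorem lower_eq_one_iff {x : F} : lower x = 1 ↔ x = 0 :=
  (QuotientGroup.eq_one_iff _).trans (transvection_mem_center_iff one_ne_zero x)

theorem upper_neg (x : F) : upper (-x) = (upper x)⁻¹ := by
  rw [eq_inv_iff_mul_eq_one, ← upper_add, neg_add_cancel, upper_eq_one_iff]

theorem upper_injective : Function.Injective (upper (F := F)) := fun x y h => by
  rw [← mul_inv_eq_one, ← upper_neg, ← upper_add, upper_eq_one_iff] at h
  linear_combination h

theorem upper_pow (x : F) (n : ℕ) : upper x ^ n = upper (n * x) := by
  induction n with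
  | zero => rw [pow_zero, eq_comm, upper_eq_one_iff, Nat.cast_zero, zero_mul]
  | succ n ih => rw [pow_succ, ih, ← upper_add, Nat.cast_succ, add_one_mul]

theorem coe_transvection_zero_one (x : F) :
    (SpecialLinearGroup.transvection zero_ne_one x : SL(2, F)).1 = !![1, x; 0, 1] := by
  ext i j
  fin_cases i <;> fin_cases j <;> simp [transvection_coe]

theorem coe_transvection_one_zero (x : F) :
    (SpecialLinearGroup.transvection one_ne_zero x : SL(2, F)).1 = !![1, 0; x, 1] := by
  ext i j
  fin_cases i <;> fin_cases j <;> simp [transvection_coe]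

theorem torus_mul_upper_mul_inv (a : Fˣ) (x : F) :
    torus a * upper x * (torus a)⁻¹ = upper (a ^ 2 * x) := by
  have h : (diag2 (a : F) a.ne_zero : SL(2, F)) * SpecialLinearGroup.transvection zero_ne_one x =
      SpecialLinearGroup.transvection zero_ne_one (a ^ 2 * x) * diag2 (a : F) a.ne_zero := by
    refine Subtype.ext ?_
    rw [coe_mul, coe_mul, coe_transvection_zero_one, coe_transvection_zero_one, diag2_coe',
      mul_fin_two, mul_fin_two]
    simp [sq, mul_right_comm]
  exact mul_inv_eq_iff_eq_mul.2 (congrArg QuotientGroup.mk h)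

theorem torus_mul_lower_mul_inv (a : Fˣ) (x : F) :
    torus a * lower x * (torus a)⁻¹ = lower (x / a ^ 2) := by
  have h : (diag2 (a : F) a.ne_zero : SL(2, F)) * SpecialLinearGroup.transvection one_ne_zero x =
      SpecialLinearGroup.transvection one_ne_zero (x / a ^ 2) * diag2 (a : F) a.ne_zero := by
    refine Subtype.ext ?_
    rw [coe_mul, coe_mul, coe_transvection_one_zero, coe_transvection_one_zero, diag2_coe',
      mul_fin_two, mul_fin_two]
    have hx : (a : F)⁻¹ * x = x / a ^ 2 * a := by field_simp
    simp [hx]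
  exact mul_inv_eq_iff_eq_mul.2 (congrArg QuotientGroup.mk h)

theorem weyl_mul_upper_mul_inv (x : F) : weyl * upper x * weyl⁻¹ = lower (-x) := by
  let w : SL(2, F) := ⟨!![0, -1; 1, 0], by simp⟩
  have h : w * SpecialLinearGroup.transvection zero_ne_one x =
      SpecialLinearGroup.transvection one_ne_zero (-x) * w := by
    refine Subtype.ext ?_
    rw [coe_mul, coe_mul, coe_transvection_zero_one, coe_transvection_one_zero, mul_fin_two,
      mul_fin_two]
    simp
  exact mul_inv_eq_iff_eq_mul.2 (congrArg QuotientGroup.mk h)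

theorem upper_smul_infty (x : F) : upper x • (∞ : ProjLine F) = ∞ :=
  mk_smul_infty_eq_infty_iff.2 (by simp [transvection_coe])

theorem upper_smul_coe (x : F) (z : AlgebraicClosure F) :
    upper x • (z : ProjLine F) = ((z + algebraMap F _ x : AlgebraicClosure F) : ProjLine F) :=
  (smul_some_eq_ite (g := mapGL (AlgebraicClosure F) (SpecialLinearGroup.transvection
    zero_ne_one x : SL(2, F)))).trans (by simp [transvection_coe])

theorem lower_smul_infty {t : F} (ht : t ≠ 0) :
    lower t • (∞ : ProjLine F) = ((algebraMap F _ t⁻¹ : AlgebraicClosure F) : ProjLine F) :=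
  (mk_smul_infty _).trans (by simp [transvection_coe, ht])

theorem torus_smul_infty (a : Fˣ) : torus a • (∞ : ProjLine F) = ∞ :=
  mk_smul_infty_eq_infty_iff.2 (by simp [diag2_coe'])

theorem torus_smul_zero (a : Fˣ) :
    torus a • ((0 : AlgebraicClosure F) : ProjLine F) = (0 : AlgebraicClosure F) :=
  mk_smul_coe_eq_coe_iff.2 (by simp [diag2_coe'])

theorem weyl_smul_infty :
    (weyl : PSL2 F) • (∞ : ProjLine F) = (0 : AlgebraicClosure F) :=
  (mk_smul_infty _).trans (by simp)

theorem upper_mul_lower_smul_infty_eq_zero_iff {x t : F} (ht : t ≠ 0) :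
    (upper x * lower t) • (∞ : ProjLine F) = (0 : AlgebraicClosure F) ↔ x = -t⁻¹ := by
  rw [mul_smul, lower_smul_infty ht, upper_smul_coe, OnePoint.coe_eq_coe, ← map_add, map_eq_zero,
    add_comm, add_eq_zero_iff_eq_neg]

theorem exists_eq_torus_mul_upper {g : PSL2 F} (hg : g • (∞ : ProjLine F) = ∞) :
    ∃ a x, g = torus a * upper x := by
  obtain ⟨A, rfl⟩ := QuotientGroup.mk_surjective g
  have h10 := mk_smul_infty_eq_infty_iff.1 hg
  have hdet := A.det_coe
  rw [det_fin_two, h10, mul_zero, sub_zero] at hdet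
  have h00 : A 0 0 ≠ 0 := left_ne_zero_of_mul_eq_one hdet
  have hA : A = (diag2 (A 0 0) h00 : SL(2, F)) *
      SpecialLinearGroup.transvection zero_ne_one (A 0 1 / A 0 0) := by
    refine Subtype.ext ((eta_fin_two A.1).trans ?_)
    rw [coe_mul, coe_transvection_zero_one, diag2_coe', mul_fin_two, h10,
      eq_inv_of_mul_eq_one_right hdet]
    simp [mul_div_cancel₀ _ h00]
  exact ⟨Units.mk0 _ h00, A 0 1 / A 0 0, congrArg QuotientGroup.mk hA⟩

theorem mem_unip_infty_iff {g : PSL2 F} : g ∈ unip ∞ ↔ ∃ x, g = upper x := by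
  have upper_mem (x : F) : upper x ∈ unip ∞ := by
    refine (isMobiusAction.mem_unip_iff _ _).2 (or_iff_not_imp_left.2 fun hx =>
      ⟨upper_smul_infty x, fun R hR => ?_⟩)
    induction R using OnePoint.rec with
    | infty => rfl
    | coe z => simp_all [upper_smul_coe]
  refine ⟨fun hg => ?_, ?_⟩
  · obtain ⟨a, x, rfl⟩ := exists_eq_torus_mul_upper (isMobiusAction.unip_le_stabilizer _ hg)
    have ha : torus a ∈ unip ∞ := (Subgroup.mul_mem_cancel_right _ (upper_mem x)).1 hg
    rcases (isMobiusAction.mem_unip_iff _ _).1 ha with ha | ha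
    · exact ⟨x, by rw [ha, one_mul]⟩
    · exact absurd (ha.2 _ (torus_smul_zero a)) (OnePoint.coe_ne_infty _)
  · rintro ⟨x, rfl⟩
    exact upper_mem x

theorem mem_unip_zero_iff {g : PSL2 F} :
    g ∈ unip ((0 : AlgebraicClosure F) : ProjLine F) ↔ ∃ x, g = lower x := by
  have hg : g = weyl * (weyl⁻¹ * g * weyl) * weyl⁻¹ := by group
  rw [← weyl_smul_infty, hg, isMobiusAction.conj_mem_unip_iff, mem_unip_infty_iff]
  constructor
  · rintro ⟨x, hx⟩
    exact ⟨-x, by rw [hx, weyl_mul_upper_mul_inv]⟩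
  · rintro ⟨x, hx⟩
    exact ⟨-x, by rw [← hg] at hx; rw [hx, ← neg_neg x, ← weyl_mul_upper_mul_inv]; group⟩

theorem unip_ne_bot_of_mem {P : ProjLine F} {y : PSL2 F} (hy : y ∈ unip P) (hy1 : y ≠ 1) :
    unip P ≠ ⊥ := fun h => hy1 (by rwa [h, Subgroup.mem_bot] at hy)

theorem stabilizer_ne_top (P : ProjLine F) : stabilizer (PSL2 F) P ≠ ⊤ := fun h => by
  have mem (g : PSL2 F) : g • P = P := (h ▸ Subgroup.mem_top g : g ∈ stabilizer (PSL2 F) P)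
  have h_infty := isMobiusAction.eq_of_smul_eq (mem_unip_infty_iff.2 ⟨1, rfl⟩) (by simp)
    (mem (upper 1))
  have h_zero := isMobiusAction.eq_of_smul_eq (mem_unip_zero_iff.2 ⟨1, rfl⟩) (by simp)
    (mem (lower 1))
  exact OnePoint.infty_ne_coe _ (h_infty.symm.trans h_zero)

theorem center_eq_bot : Subgroup.center (PSL2 F) = ⊥ := by
  refine (Subgroup.eq_bot_iff_forall _).2 fun z hz => by_contra fun hz1 => ?_
  rw [Subgroup.mem_center_iff] at hz
  have h_infty := isMobiusAction.mem_unip_of_commute (mem_unip_infty_iff.2 ⟨1, rfl⟩) (by simp)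
    (hz (upper 1)).symm
  have h_zero := isMobiusAction.mem_unip_of_commute (mem_unip_zero_iff.2 ⟨1, rfl⟩) (by simp)
    (hz (lower 1)).symm
  exact OnePoint.infty_ne_coe _
    (isMobiusAction.eq_of_smul_eq h_zero hz1 (isMobiusAction.unip_le_stabilizer _ h_infty))

theorem exists_eq_coe_algebraMap_of_mem_unip {z : AlgebraicClosure F} {y : PSL2 F}
    (hy : y ∈ unip (z : ProjLine F)) (hy1 : y ≠ 1) : ∃ x : F, z = algebraMap F _ x := by
  obtain ⟨A, rfl⟩ := QuotientGroup.mk_surjective y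
  have h10 : A 1 0 ≠ 0 := fun h => OnePoint.infty_ne_coe z
    (isMobiusAction.eq_of_smul_eq hy hy1 (mk_smul_infty_eq_infty_iff.2 h))
  have hz := mk_smul_coe_eq_coe_iff.1 (isMobiusAction.unip_le_stabilizer _ hy)
  set f := algebraMap F (AlgebraicClosure F)
  have hc : f (A 1 0) ≠ 0 := (map_ne_zero f).2 h10
  -- By Vieta, the second fixed point is `(a - d) / c - z`, which must be equal to `z`.
  have hsum : 2 * f (A 1 0) * z = f (A 0 0) - f (A 1 1) := by
    have h := isMobiusAction.eq_of_smul_eq (R := (((f (A 0 0) - f (A 1 1)) / f (A 1 0) - z :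
      AlgebraicClosure F) : ProjLine F)) hy hy1 (mk_smul_coe_eq_coe_iff.2 (by
        field_simp
        linear_combination f (A 1 0) ^ 2 * hz))
    rw [OnePoint.coe_eq_coe, sub_eq_iff_eq_add, div_eq_iff hc] at h
    linear_combination -h
  have hsq : (f (A 0 0) - f (A 1 0) * z) ^ 2 = 1 ^ 2 := by
    have hdet := congrArg f A.det_coe
    rw [det_fin_two, map_sub, map_mul, map_mul, map_one] at hdet
    linear_combination hdet - f (A 1 0) * hz + (f (A 1 0) * z - f (A 0 0)) * hsum
  rcases eq_or_eq_neg_of_sq_eq_sq _ _ hsq with h | h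
  · refine ⟨(A 0 0 - 1) / A 1 0, ?_⟩
    rw [map_div₀, map_sub, map_one, eq_div_iff hc]
    linear_combination -h
  · refine ⟨(A 0 0 + 1) / A 1 0, ?_⟩
    rw [map_div₀, map_add, map_one, eq_div_iff hc]
    linear_combination -h

theorem exists_smul_infty_eq_of_mem_unip {P : ProjLine F} {y : PSL2 F} (hy : y ∈ unip P)
    (hy1 : y ≠ 1) : ∃ s : PSL2 F, s • (∞ : ProjLine F) = P := by
  induction P using OnePoint.rec with
  | infty => exact ⟨1, one_smul _ _⟩
  | coe z =>
    obtain ⟨x, rfl⟩ := exists_eq_coe_algebraMap_of_mem_unip hy hy1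
    exact ⟨upper x * weyl, by rw [mul_smul, weyl_smul_infty, upper_smul_coe, zero_add]⟩

theorem exists_mem_unip_iff_pow_eq_one {p : ℕ} [Fact p.Prime] [CharP F p] {y : PSL2 F} :
    (∃ P : ProjLine F, y ∈ unip P) ↔ y ^ p = 1 := by
  constructor
  · rintro ⟨P, hy⟩
    by_cases hy1 : y = 1
    · rw [hy1, one_pow]
    obtain ⟨s, rfl⟩ := exists_smul_infty_eq_of_mem_unip hy hy1
    obtain ⟨g, rfl⟩ := (MulAut.conj s).surjective y
    obtain ⟨x, rfl⟩ := mem_unip_infty_iff.1 ((isMobiusAction.conj_mem_unip_iff s).1 hy)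
    rw [← map_pow, upper_pow, CharP.cast_eq_zero, zero_mul, upper_eq_one_iff.2 rfl, map_one]
  · intro hy
    obtain ⟨P, hP⟩ := isMobiusAction.exists_smul_eq y
    obtain ⟨χ, hχ⟩ := isMobiusAction.exists_character P
    refine ⟨P, (hχ ⟨y, hP⟩).1 (Units.ext ?_)⟩
    have := charP_of_injective_algebraMap (algebraMap F (AlgebraicClosure F)).injective p
    have hpow : (χ ⟨y, hP⟩ : AlgebraicClosure F) ^ p = 1 := by
      rw [← Units.val_pow_eq_pow_val, ← map_pow, show (⟨y, hP⟩ : stabilizer _ P) ^ p = 1 from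
        Subtype.ext hy, map_one, Units.val_one]
    exact frobenius_inj (AlgebraicClosure F) p (by simpa [frobenius_def] using hpow)

section Finite

variable [Finite F]

theorem exists_closure_pair_eq_stabilizer_infty :
    ∃ x y, Subgroup.closure {x, y} = stabilizer (PSL2 F) (∞ : ProjLine F) := by
  obtain ⟨l, hl⟩ := IsCyclic.exists_generator (α := Fˣ)
  refine ⟨torus l, upper 1, le_antisymm
    (closure_pair_le (torus_smul_infty l) (upper_smul_infty 1)) fun g hg => ?_⟩
  set N := Subgroup.closure {torus l, upper (1 : F)}
  have torus_mem (a : Fˣ) : torus a ∈ N := by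
    obtain ⟨n, rfl⟩ := Subgroup.mem_zpowers_iff.1 (hl a)
    exact map_zpow torus l n ▸ zpow_mem (left_mem_closure_pair _ _) n
  have upper_sq_mem (a : F) : upper (a ^ 2) ∈ N := by
    by_cases ha : a = 0
    · simp [ha, upper_eq_one_iff.2]
    · have h := torus_mul_upper_mul_inv (Units.mk0 a ha) 1
      rw [mul_one, Units.val_mk0] at h
      exact h ▸ mul_mem (mul_mem (torus_mem _) (right_mem_closure_pair _ _)) (inv_mem (torus_mem _))
  obtain ⟨a, x, rfl⟩ := exists_eq_torus_mul_upper hg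
  obtain ⟨b, c, rfl⟩ := exists_eq_sq_sub_sq x
  rw [sub_eq_add_neg, upper_add, upper_neg]
  exact mul_mem (torus_mem a) (mul_mem (upper_sq_mem b) (inv_mem (upper_sq_mem c)))

theorem exists_closure_pair_eq_stabilizer {P : ProjLine F} (hP : unip P ≠ ⊥) :
    ∃ x y, Subgroup.closure {x, y} = stabilizer (PSL2 F) P := by
  obtain ⟨⟨g, hg⟩, hg1⟩ := Subgroup.ne_bot_iff_exists_ne_one.1 hP
  obtain ⟨s, rfl⟩ := exists_smul_infty_eq_of_mem_unip hg (by simpa using hg1)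
  obtain ⟨x, y, h⟩ := exists_closure_pair_eq_stabilizer_infty (F := F)
  refine ⟨MulAut.conj s x, MulAut.conj s y, ?_⟩
  rw [MulAction.stabilizer_smul_eq_stabilizer_map_conj, ← h, MonoidHom.map_closure, Set.image_pair]
  rfl

variable (F) in
theorem exists_closure_pair_eq_top_coprime :
    ∃ x y : PSL2 F, Subgroup.closure {x, y} = ⊤ ∧ (orderOf x).Coprime (orderOf y) := by
  have hone : 2 ≤ unipOrder unip (⊤ : Subgroup (PSL2 F)) (∞ : ProjLine F) :=
    two_le_unipOrder_iff.2 ⟨upper 1, Subgroup.mem_top _, by simp, mem_unip_infty_iff.2 ⟨1, rfl⟩⟩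
  exact isMobiusAction.exists_closure_pair_eq_coprime hone
    fun h => stabilizer_ne_top _ (top_le_iff.1 h)

end Finite

end PSL2

end ProjectiveLine

section Automorphisms

open OnePoint

theorem isSquare_mul_of_not_isSquare {C : Type*} [Group C] [IsCyclic C] {a b : C}
    (ha : ¬ IsSquare a) (hb : ¬ IsSquare b) : IsSquare (a * b) := by
  obtain ⟨g, hg⟩ := IsCyclic.exists_generator (α := C)
  obtain ⟨m, rfl⟩ := Subgroup.mem_zpowers_iff.1 (hg a)
  obtain ⟨n, rfl⟩ := Subgroup.mem_zpowers_iff.1 (hg b)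
  have hm : Odd m := Int.not_even_iff_odd.1 fun h => ha (h.isSquare_zpow g)
  have hn : Odd n := Int.not_even_iff_odd.1 fun h => hb (h.isSquare_zpow g)
  exact zpow_add g m n ▸ (hm.add_odd hn).isSquare_zpow g

theorem isCyclic_ringAut (F : Type*) [Field F] [Finite F] : IsCyclic (RingAut F) := by
  obtain ⟨p, _⟩ := CharP.exists F
  have : Fact p.Prime := ⟨CharP.char_is_prime F p⟩
  let _ : Algebra (ZMod p) F := ZMod.algebra F p
  let f : Gal(F/ZMod p) →* RingAut F := MonoidHom.mk' (fun e => e.toRingEquiv) fun _ _ => rfl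
  refine isCyclic_of_surjective f fun τ => ⟨AlgEquiv.ofRingEquiv (f := τ) fun r => ?_, rfl⟩
  obtain ⟨n, rfl⟩ := ZMod.natCast_zmod_surjective r
  simp

theorem exists_ringAut_of_map_sq_mul {F : Type*} [Field F] [Finite F] {f : F →+ F}
    (hf : f 1 ≠ 0) (hsq : ∀ a x, f (a ^ 2 * x) * f 1 = f (a ^ 2) * f x) :
    ∃ (τ : RingAut F) (c : Fˣ), ∀ x, f x = c * τ x := by
  have hmul (y x : F) : f (y * x) * f 1 = f y * f x := by
    obtain ⟨a, b, rfl⟩ := exists_eq_sq_sub_sq y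
    rw [sub_mul, map_sub, map_sub, sub_mul, sub_mul, hsq, hsq]
  let g : F →+* F :=
    { toFun := fun x => f x / f 1
      map_one' := div_self hf
      map_mul' := fun x y => by
        rw [div_mul_div_comm, ← hmul, mul_div_mul_right _ _ hf]
      map_zero' := by rw [map_zero, zero_div]
      map_add' := fun x y => by rw [map_add, add_div] }
  exact ⟨RingEquiv.ofBijective g (Finite.injective_iff_bijective.1 g.injective),
    Units.mk0 _ hf, fun x => (mul_div_cancel₀ (f x) hf).symm⟩

namespace IsMobiusAction

variable {Γ X K : Type*} [Group Γ] [MulAction Γ X] [Field K] {U : X → Subgroup Γ}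

theorem smul_eq_iff_conj_mem_unip (Z : IsMobiusAction K U) {P R : X} {y : Γ} (hy : y ∈ U P)
    (hy1 : y ≠ 1) (g : Γ) : g • P = R ↔ g * y * g⁻¹ ∈ U R := by
  refine ⟨fun h => h ▸ Z.conj_mem_unip g hy, fun h => ?_⟩
  exact Z.eq_of_smul_eq h (by simpa using hy1) (Z.unip_le_stabilizer _ (Z.conj_mem_unip g hy))

theorem map_smul_eq_iff (Z : IsMobiusAction K U) {α : MulAut Γ} {P P' R R' : X}
    (hP : U P ≠ ⊥) (hαP : ∀ z, α z ∈ U P' ↔ z ∈ U P) (hαR : ∀ z, α z ∈ U R' ↔ z ∈ U R)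
    (g : Γ) : α g • P' = R' ↔ g • P = R := by
  obtain ⟨⟨y, hy⟩, hy1⟩ := Subgroup.ne_bot_iff_exists_ne_one.1 hP
  replace hy1 : y ≠ 1 := by simpa using hy1
  rw [Z.smul_eq_iff_conj_mem_unip hy hy1, Z.smul_eq_iff_conj_mem_unip ((hαP y).2 hy) (by simpa),
    ← hαR, map_mul, map_mul, map_inv]

end IsMobiusAction

namespace PSL2

variable {F : Type*} [Field F]

theorem upper_mem_unip (x : F) : upper x ∈ unip ∞ := mem_unip_infty_iff.2 ⟨x, rfl⟩

theorem lower_mem_unip (x : F) : lower x ∈ unip ((0 : AlgebraicClosure F) : ProjLine F) :=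
  mem_unip_zero_iff.2 ⟨x, rfl⟩

theorem unip_infty_ne_bot : unip (∞ : ProjLine F) ≠ ⊥ :=
  unip_ne_bot_of_mem (upper_mem_unip 1) (by simp)

theorem unip_zero_ne_bot : unip ((0 : AlgebraicClosure F) : ProjLine F) ≠ ⊥ :=
  unip_ne_bot_of_mem (lower_mem_unip 1) (by simp)

theorem exists_conj_upper_eq {g : PSL2 F} (hg : g • (∞ : ProjLine F) = ∞) :
    ∃ a : Fˣ, ∀ x, g * upper x * g⁻¹ = upper ((a : F) ^ 2 * x) := by
  obtain ⟨a, z, rfl⟩ := exists_eq_torus_mul_upper hg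
  refine ⟨a, fun x => ?_⟩
  have hcomm : upper z * upper x * (upper z)⁻¹ = upper x := by
    rw [mul_inv_eq_iff_eq_mul, ← upper_add, ← upper_add, add_comm]
  rw [← torus_mul_upper_mul_inv]
  conv_rhs => rw [← hcomm]
  group

theorem exists_map_mem_unip_iff [Finite F] (α : MulAut (PSL2 F)) {P : ProjLine F}
    (hP : unip P ≠ ⊥) : ∃ P', ∀ z, α z ∈ unip P' ↔ z ∈ unip P := by
  obtain ⟨⟨y, hy⟩, hy1⟩ := Subgroup.ne_bot_iff_exists_ne_one.1 hP
  replace hy1 : y ≠ 1 := by simpa using hy1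
  obtain ⟨p, _⟩ := CharP.exists F
  have : Fact p.Prime := ⟨CharP.char_is_prime F p⟩
  obtain ⟨P', hP'⟩ := exists_mem_unip_iff_pow_eq_one.2
    (by rw [← map_pow, exists_mem_unip_iff_pow_eq_one.1 ⟨P, hy⟩, map_one] : α y ^ p = 1)
  refine ⟨P', fun z => ⟨fun hz => ?_, fun hz => ?_⟩⟩
  · refine isMobiusAction.mem_unip_of_commute hy hy1 (α.injective ?_)
    rw [map_mul, map_mul, isMobiusAction.unip_comm P' _ hz _ hP']
  · refine isMobiusAction.mem_unip_of_commute hP' (by simpa) ?_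
    rw [← map_mul, ← map_mul, isMobiusAction.unip_comm P z hz y hy]

theorem exists_smul_infty_zero_eq {P R : ProjLine F} (hP : unip P ≠ ⊥) (hR : unip R ≠ ⊥)
    (hPR : P ≠ R) : ∃ s : PSL2 F,
      s • (∞ : ProjLine F) = P ∧ s • ((0 : AlgebraicClosure F) : ProjLine F) = R := by
  obtain ⟨⟨g, hg⟩, hg1⟩ := Subgroup.ne_bot_iff_exists_ne_one.1 hP
  obtain ⟨⟨h, hh⟩, hh1⟩ := Subgroup.ne_bot_iff_exists_ne_one.1 hR
  obtain ⟨s, rfl⟩ := exists_smul_infty_eq_of_mem_unip hg (by simpa using hg1)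
  obtain ⟨R, rfl⟩ := MulAction.surjective s R
  induction R using OnePoint.rec with
  | infty => exact absurd rfl hPR
  | coe z =>
    obtain ⟨k, rfl⟩ := (MulAut.conj s).surjective h
    obtain ⟨x, rfl⟩ := exists_eq_coe_algebraMap_of_mem_unip
      ((isMobiusAction.conj_mem_unip_iff s).1 hh) (by simpa using hh1)
    exact ⟨s * upper x, by rw [mul_smul, upper_smul_infty],
      by rw [mul_smul, upper_smul_coe, zero_add]⟩

theorem exists_map_upper_eq [Finite F] {α : MulAut (PSL2 F)}
    (hα : ∀ z, α z ∈ unip (∞ : ProjLine F) ↔ z ∈ unip (∞ : ProjLine F)) :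
    ∃ (τ : RingAut F) (c : Fˣ), ∀ x, α (upper x) = upper (c * τ x) := by
  choose f hf using fun x => mem_unip_infty_iff.1 ((hα _).2 (upper_mem_unip x))
  let φ : F →+ F := AddMonoidHom.mk' f fun x y => upper_injective (by
    rw [← hf, upper_add, upper_add, map_mul, hf, hf])
  have hφ : φ 1 ≠ 0 := fun h => by
    have h1 := hf 1
    rw [show f 1 = 0 from h, upper_eq_one_iff.2 rfl] at h1
    simp at h1
  have hsq (a x : F) : φ (a ^ 2 * x) * φ 1 = φ (a ^ 2) * φ x := by
    by_cases ha : a = 0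
    · simp [ha]
    lift a to Fˣ using IsUnit.mk0 a ha
    have ht := (isMobiusAction.map_smul_eq_iff unip_infty_ne_bot hα hα _).2 (torus_smul_infty a)
    obtain ⟨b, hb⟩ := exists_conj_upper_eq ht
    have hφb (x : F) : φ (a ^ 2 * x) = b ^ 2 * φ x := upper_injective (by
      change upper (f _) = upper (_ * f _)
      rw [← hb, ← hf, ← hf, ← torus_mul_upper_mul_inv, map_mul, map_mul, map_inv])
    have hφ1 := hφb 1
    rw [mul_one] at hφ1
    rw [hφb, hφ1]
    ring
  obtain ⟨τ, c, h⟩ := exists_ringAut_of_map_sq_mul hφ hsq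
  exact ⟨τ, c, fun x => (hf x).trans (congrArg upper (h x))⟩

theorem map_lower_eq {α : MulAut (PSL2 F)} {τ : RingAut F} {c : Fˣ}
    (hα : ∀ x, α (upper x) = upper (c * τ x))
    (h_infty : ∀ z, α z ∈ unip (∞ : ProjLine F) ↔ z ∈ unip (∞ : ProjLine F))
    (h_zero : ∀ z, α z ∈ unip ((0 : AlgebraicClosure F) : ProjLine F) ↔
      z ∈ unip ((0 : AlgebraicClosure F) : ProjLine F)) (x : F) :
    α (lower x) = lower (τ x / c) := by
  by_cases hx : x = 0
  · simp [hx, lower_eq_one_iff.2]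
  obtain ⟨y, hy⟩ := mem_unip_zero_iff.1 ((h_zero _).2 (lower_mem_unip x))
  have hy0 : y ≠ 0 := by
    rintro rfl
    rw [lower_eq_one_iff.2 rfl, EmbeddingLike.map_eq_one_iff, lower_eq_one_iff] at hy
    exact hx hy
  have h := (isMobiusAction.map_smul_eq_iff unip_infty_ne_bot h_infty h_zero _).2
    ((upper_mul_lower_smul_infty_eq_zero_iff hx).2 rfl)
  rw [map_mul, hα, hy, upper_mul_lower_smul_infty_eq_zero_iff hy0, map_neg, map_inv₀, mul_neg,
    neg_inj] at h
  rw [hy, ← inv_inv y, ← h, mul_inv, inv_inv, div_eq_mul_inv, mul_comm]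

/-- The automorphism `α` of `PSL₂(F)` is, up to an inner automorphism, the one which applies the
field automorphism `τ` to matrices and then conjugates by `!![c, 0; 0, 1]`. -/
def IsSemilinear (α : MulAut (PSL2 F)) (τ : RingAut F) (c : Fˣ) : Prop :=
  ∃ s, ∀ x, α (upper x) = s * upper (c * τ x) * s⁻¹ ∧ α (lower x) = s * lower (τ x / c) * s⁻¹

theorem exists_isSemilinear [Finite F] (α : MulAut (PSL2 F)) : ∃ τ c, IsSemilinear α τ c := by
  obtain ⟨P, hP⟩ := exists_map_mem_unip_iff α unip_infty_ne_bot
  obtain ⟨R, hR⟩ := exists_map_mem_unip_iff α unip_zero_ne_bot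
  have hPR : P ≠ R := by
    rintro rfl
    have h := (isMobiusAction.map_smul_eq_iff unip_infty_ne_bot hP hR 1).1 (by simp)
    simp at h
  obtain ⟨s, rfl, rfl⟩ := exists_smul_infty_zero_eq (P := P) (R := R)
    (unip_ne_bot_of_mem ((hP _).2 (upper_mem_unip 1)) (by simp))
    (unip_ne_bot_of_mem ((hR _).2 (lower_mem_unip 1)) (by simp)) hPR
  set β : MulAut (PSL2 F) := (MulAut.conj s)⁻¹ * α
  have hβ (z : PSL2 F) : α z = s * β z * s⁻¹ := by simp [β, mul_assoc]
  simp only [hβ, isMobiusAction.conj_mem_unip_iff] at hP hR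
  obtain ⟨τ, c, h⟩ := exists_map_upper_eq hP
  exact ⟨τ, c, s, fun x => ⟨by rw [hβ, h], by rw [hβ, map_lower_eq h hP hR]⟩⟩

namespace IsSemilinear

variable {α β : MulAut (PSL2 F)} {τ τ' : RingAut F} {c c' : Fˣ}

theorem ringAut_unique (h : IsSemilinear α τ c) (h' : IsSemilinear α τ' c') : τ = τ' := by
  obtain ⟨s, hs⟩ := h
  obtain ⟨s', hs'⟩ := h'
  have hconj (x : F) : (s'⁻¹ * s) * upper (c * τ x) * (s'⁻¹ * s)⁻¹ = upper (c' * τ' x) := by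
    have h := (hs x).1.symm.trans (hs' x).1
    rw [← mul_inv_eq_iff_eq_mul, ← inv_mul_eq_iff_eq_mul] at h
    rw [← h]
    group
  have hfix : (s'⁻¹ * s) • (∞ : ProjLine F) = ∞ := by
    rw [isMobiusAction.smul_eq_iff_conj_mem_unip (upper_mem_unip (c * τ 1)) (by simp), hconj]
    exact upper_mem_unip _
  obtain ⟨a, ha⟩ := exists_conj_upper_eq hfix
  have hτ (x : F) : (a : F) ^ 2 * (c * τ x) = c' * τ' x :=
    upper_injective (by rw [← ha, hconj])
  have hc := hτ 1
  rw [map_one, map_one] at hc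
  ext x
  refine mul_left_cancel₀ c'.ne_zero ?_
  linear_combination hτ x - τ x * hc

theorem mul (h : IsSemilinear α τ c) (h' : IsSemilinear β τ' c') :
    IsSemilinear (α * β) (τ * τ') (c * Units.map τ c') := by
  obtain ⟨s, hs⟩ := h
  obtain ⟨s', hs'⟩ := h'
  refine ⟨α s' * s, fun x => ⟨?_, ?_⟩⟩
  · rw [MulAut.mul_apply, (hs' x).1, map_mul, map_mul, map_inv, (hs _).1, map_mul]
    simp [mul_assoc]
  · rw [MulAut.mul_apply, (hs' x).2, map_mul, map_mul, map_inv, (hs _).2, map_div₀]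
    simp [mul_assoc, div_div, mul_comm]

theorem conj (g : PSL2 F) : IsSemilinear (MulAut.conj g) 1 1 :=
  ⟨g, fun x => by simp⟩

theorem mem_range_conj (h : IsSemilinear α 1 c) (hc : IsSquare c) :
    α ∈ (MulAut.conj : PSL2 F →* _).range := by
  obtain ⟨s, hs⟩ := h
  obtain ⟨a, rfl⟩ := hc
  refine ⟨s * torus a, MulEquiv.ext fun g => ?_⟩
  induction g using induction_upper_lower with
  | upper x =>
    rw [(hs x).1, RingAut.one_apply, Units.val_mul, ← sq, ← torus_mul_upper_mul_inv]
    simp [mul_assoc]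
  | lower x =>
    rw [(hs x).2, RingAut.one_apply, Units.val_mul, ← sq, ← torus_mul_lower_mul_inv]
    simp [mul_assoc]
  | mul g h hg hh => rw [map_mul (MulAut.conj (s * torus a)), hg, hh, map_mul α]

end IsSemilinear

section FieldAut

variable [Finite F]

/-- The field automorphism which underlies an automorphism of `PSL₂(F)`. -/
noncomputable def fieldAut : MulAut (PSL2 F) →* RingAut F :=
  MonoidHom.mk' (fun α => (exists_isSemilinear α).choose) fun α β =>
    (exists_isSemilinear (α * β)).choose_spec.choose_spec.ringAut_unique
      ((exists_isSemilinear α).choose_spec.choose_spec.mul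
        (exists_isSemilinear β).choose_spec.choose_spec)

theorem exists_isSemilinear_fieldAut (α : MulAut (PSL2 F)) : ∃ c, IsSemilinear α (fieldAut α) c :=
  (exists_isSemilinear α).choose_spec

theorem fieldAut_conj (g : PSL2 F) : fieldAut (MulAut.conj g) = 1 :=
  (exists_isSemilinear_fieldAut _).choose_spec.ringAut_unique (.conj g)

theorem mul_mem_range_conj {α β : MulAut (PSL2 F)} (hα : fieldAut α = 1) (hβ : fieldAut β = 1)
    (hα' : α ∉ (MulAut.conj : PSL2 F →* _).range) (hβ' : β ∉ (MulAut.conj : PSL2 F →* _).range) :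
    α * β ∈ (MulAut.conj : PSL2 F →* _).range := by
  obtain ⟨c, hc⟩ := exists_isSemilinear_fieldAut α
  obtain ⟨d, hd⟩ := exists_isSemilinear_fieldAut β
  rw [hα] at hc
  rw [hβ] at hd
  have hcd := hc.mul hd
  rw [one_mul, show Units.map ((1 : RingAut F) : F →* F) d = d from Units.ext rfl] at hcd
  exact hcd.mem_range_conj (isSquare_mul_of_not_isSquare (fun h => hα' (hc.mem_range_conj h))
    fun h => hβ' (hd.mem_range_conj h))

end FieldAut

end PSL2

end Automorphisms

section NGenerated

/-- `IsNGenerated H n` says that the subgroup `H` is generated by a set of at most `n` elements.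
Generators are recorded in the ambient group, so that they can be moved along homomorphisms. -/
def IsNGenerated {G : Type*} [Group G] (H : Subgroup G) (n : ℕ) : Prop :=
  ∃ T : Finset G, T.card ≤ n ∧ Subgroup.closure (T : Set G) = H

variable {G N : Type*} [Group G] [Group N]

theorem isNGenerated_closure_singleton (x : G) : IsNGenerated (Subgroup.closure {x}) 1 :=
  ⟨{x}, by simp⟩

theorem isNGenerated_closure_pair (x y : G) : IsNGenerated (Subgroup.closure {x, y}) 2 := by
  classical
  exact ⟨{x, y}, Finset.card_le_two, by simp⟩

theorem isNGenerated_one_of_isCyclic [IsCyclic G] (H : Subgroup G) : IsNGenerated H 1 := by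
  obtain ⟨g, rfl⟩ := (Subgroup.isCyclic_iff_exists_zpowers_eq_top H).1 inferInstance
  rw [Subgroup.zpowers_eq_closure]
  exact isNGenerated_closure_singleton g

namespace IsNGenerated

variable {H K : Subgroup G} {m n : ℕ}

theorem minGen_le (hH : IsNGenerated H n) : minGen H ≤ n := by
  classical
  obtain ⟨T, hT, rfl⟩ := hH
  set S := T.subtype (· ∈ Subgroup.closure (T : Set G))
  have hS : Subgroup.closure (S : Set (Subgroup.closure (T : Set G))) = ⊤ := by
    rw [← Subgroup.closure_closure_coe_preimage (k := (T : Set G))]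
    congr 1
    ext x
    simp [S]
  have hcard : S.card ≤ T.card := by
    rw [Finset.card_subtype]
    exact Finset.card_filter_le _ _
  exact le_trans (Nat.sInf_le ⟨S, rfl, hS⟩) (hcard.trans hT)

theorem map (hH : IsNGenerated H n) (f : G →* N) : IsNGenerated (H.map f) n := by
  classical
  obtain ⟨T, hT, rfl⟩ := hH
  exact ⟨T.image f, Finset.card_image_le.trans hT, by rw [MonoidHom.map_closure, Finset.coe_image]⟩

theorem sup (hH : IsNGenerated H n) (hK : IsNGenerated K m) : IsNGenerated (H ⊔ K) (n + m) := by
  classical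
  obtain ⟨T, hT, rfl⟩ := hH
  obtain ⟨T', hT', rfl⟩ := hK
  exact ⟨T ∪ T', (Finset.card_union_le _ _).trans (add_le_add hT hT'),
    by rw [Finset.coe_union, Subgroup.closure_union]⟩

theorem exists_inf_ker_sup_eq {f : G →* N} (hf : IsNGenerated (H.map f) n) :
    ∃ K, IsNGenerated K n ∧ (H ⊓ f.ker) ⊔ K = H := by
  classical
  obtain ⟨T, hT, hTH⟩ := hf
  have exists_lift (t : T) : ∃ x ∈ H, f x = t :=
    Subgroup.mem_map.1 (hTH ▸ Subgroup.subset_closure t.2)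
  choose r hrH hr using exists_lift
  set K := Subgroup.closure (T.attach.image r : Set G)
  have hKH : K ≤ H := by
    rw [Subgroup.closure_le]
    intro x hx
    obtain ⟨t, -, rfl⟩ := Finset.mem_image.1 hx
    exact hrH t
  have hmap : H.map f ≤ K.map f := by
    rw [← hTH, Subgroup.closure_le]
    exact fun t ht => ⟨r ⟨t, ht⟩, Subgroup.subset_closure
      (Finset.mem_image_of_mem r (T.mem_attach ⟨t, ht⟩)), hr ⟨t, ht⟩⟩
  refine ⟨K, ⟨_, Finset.card_image_le.trans (T.card_attach.trans_le hT), rfl⟩,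
    le_antisymm (sup_le inf_le_left hKH) fun x hx => ?_⟩
  obtain ⟨k, hk, hkx⟩ := hmap (Subgroup.mem_map_of_mem f hx)
  have hxk : x * k⁻¹ ∈ H ⊓ f.ker := Subgroup.mem_inf.2 ⟨mul_mem hx (inv_mem (hKH hk)),
    by rw [MonoidHom.mem_ker, map_mul, map_inv, hkx, mul_inv_cancel]⟩
  simpa using mul_mem (Subgroup.mem_sup_left hxk) (Subgroup.mem_sup_right hk)

theorem of_inf_ker {f : G →* N} (hker : IsNGenerated (H ⊓ f.ker) m)
    (hf : IsNGenerated (H.map f) n) : IsNGenerated H (m + n) := by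
  obtain ⟨K, hK, h⟩ := hf.exists_inf_ker_sup_eq
  exact h ▸ hker.sup hK

theorem of_comap_inl {M : Subgroup (G × N)} (hG : IsNGenerated (M.comap (.inl G N)) m)
    (hN : IsNGenerated (M.map (.snd G N)) n) : IsNGenerated M (m + n) := by
  refine of_inf_ker (f := .snd G N) ?_ hN
  convert hG.map (.inl G N)
  ext ⟨a, b⟩
  simp only [Subgroup.mem_inf, MonoidHom.mem_ker, MonoidHom.coe_snd, Subgroup.mem_map,
    Subgroup.mem_comap, MonoidHom.inl_apply, Prod.mk.injEq]
  constructor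
  · rintro ⟨h, rfl⟩
    exact ⟨a, h, rfl, rfl⟩
  · rintro ⟨_, h, rfl, rfl⟩
    exact ⟨h, rfl⟩

theorem prod {L : Subgroup N} (hH : IsNGenerated H m) (hL : IsNGenerated L n) :
    IsNGenerated (H.prod L) (m + n) := by
  refine of_comap_inl ?_ ?_
  · convert hH
    ext x
    simp [Subgroup.mem_prod]
  · convert hL
    ext x
    exact ⟨fun ⟨y, hy, hyx⟩ => hyx ▸ hy.2, fun hx => ⟨(1, x), ⟨one_mem _, hx⟩, rfl⟩⟩

end IsNGenerated

theorem isNGenerated_two_of_isCyclic_prod [IsCyclic G] [IsCyclic N] (H : Subgroup (G × N)) :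
    IsNGenerated H 2 :=
  .of_comap_inl (isNGenerated_one_of_isCyclic _) (isNGenerated_one_of_isCyclic _)

theorem isNGenerated_top_prod_self {x y : G} (h : Subgroup.closure {x, y} = ⊤)
    (hxy : (orderOf x).Coprime (orderOf y)) : IsNGenerated (⊤ : Subgroup (G × G)) 2 := by
  convert isNGenerated_closure_pair (x, y) (y, x)
  set M := Subgroup.closure {(x, y), (y, x)}
  have hx : (x, y) ∈ M := left_mem_closure_pair _ _
  have hy : (y, x) ∈ M := right_mem_closure_pair _ _
  obtain ⟨k, hk₁, hk₀⟩ := Nat.chineseRemainder hxy 1 0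
  have hxk : x ^ k = x := by rw [pow_eq_pow_iff_modEq.2 hk₁, pow_one]
  have hyk : y ^ k = 1 := by rw [pow_eq_pow_iff_modEq.2 hk₀, pow_zero]
  have hx₁ : (x, 1) ∈ M := by simpa [hxk, hyk] using pow_mem hx k
  have hx₂ : (1, x) ∈ M := by simpa [hxk, hyk] using pow_mem hy k
  have hy₁ : (y, 1) ∈ M := by simpa using mul_mem (inv_mem hx₂) hy
  have hy₂ : (1, y) ∈ M := by simpa using mul_mem (inv_mem hx₁) hx
  rw [eq_comm, eq_top_iff, ← Subgroup.top_prod_top, Subgroup.prod_le_iff, ← h,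
    MonoidHom.map_closure, MonoidHom.map_closure, Subgroup.closure_le, Subgroup.closure_le,
    Set.image_pair, Set.image_pair]
  exact ⟨Set.pair_subset hx₁ hy₁, Set.pair_subset hx₂ hy₂⟩

section Wreath

variable {A C W : Type*} [Group A] [Group C] [Group W] {D : Subgroup A} {σ : A →* C}
  {j : A × A →* W} {w : W}

theorem isCyclic_of_subsingleton_diff_one (hD : ((D : Set A) \ {1}).Subsingleton) :
    IsCyclic D := by
  by_cases h : ∃ a ∈ D, a ≠ 1
  · obtain ⟨a, ha, ha1⟩ := h
    refine ⟨⟨a, ha⟩, fun ⟨b, hb⟩ => ?_⟩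
    by_cases hb1 : b = 1
    · exact ⟨0, Subtype.ext (by simp [hb1])⟩
    · exact ⟨1, Subtype.ext (by simpa using hD ⟨ha, ha1⟩ ⟨hb, hb1⟩)⟩
  · push Not at h
    rw [(Subgroup.eq_bot_iff_forall D).2 h]
    infer_instance

theorem conj_eq_of_subsingleton_diff_one [D.Normal] (hD : ((D : Set A) \ {1}).Subsingleton) (a : A)
    {x : A} (hx : x ∈ D) : a * x * a⁻¹ = x := by
  by_cases hx1 : x = 1
  · simp [hx1]
  · exact hD ⟨Subgroup.Normal.conj_mem ‹_› x hx a, by simpa using hx1⟩ ⟨hx, hx1⟩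

theorem isNGenerated_four_of_isCyclic [IsCyclic C] (hσ : ((σ.ker : Set A) \ {1}).Subsingleton)
    (L : Subgroup (A × A)) : IsNGenerated L 4 := by
  have := isCyclic_of_subsingleton_diff_one hσ
  refine .of_inf_ker (f := σ.prodMap σ) (m := 2) ?_ (isNGenerated_two_of_isCyclic_prod _)
  set i := σ.ker.subtype.prodMap σ.ker.subtype
  have hi : L ⊓ (σ.prodMap σ).ker ≤ i.range := fun k hk =>
    ⟨(⟨k.1, congrArg Prod.fst hk.2⟩, ⟨k.2, congrArg Prod.snd hk.2⟩), rfl⟩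
  rw [← Subgroup.map_comap_eq_self hi]
  exact (isNGenerated_two_of_isCyclic_prod _).map i

theorem prod_le_closure_pair_swap (hD : ((D : Set A) \ {1}).Subsingleton) {d : A} (hd : d ∈ D)
    (hd1 : d ≠ 1) : D.prod D ≤ Subgroup.closure {(d, 1), (1, d)} := by
  have eq_one_or_eq {x : A} (hx : x ∈ D) : x = 1 ∨ x = d :=
    or_iff_not_imp_left.2 fun hx1 => hD ⟨hx, hx1⟩ ⟨hd, hd1⟩
  rintro ⟨x, y⟩ ⟨hx : x ∈ D, hy : y ∈ D⟩
  have hl := left_mem_closure_pair (d, (1 : A)) (1, d)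
  have hr := right_mem_closure_pair (d, (1 : A)) (1, d)
  rcases eq_one_or_eq hx with rfl | rfl <;> rcases eq_one_or_eq hy with rfl | rfl
  · exact one_mem _
  · exact hr
  · exact hl
  · simpa using mul_mem hl hr

theorem exists_closure_pair_swap_eq (hD : ((D : Set A) \ {1}).Subsingleton)
    {E : Subgroup (A × A)} (hE : E ≤ D.prod D) (hswap : ∀ e ∈ E, e.swap ∈ E) :
    ∃ e, Subgroup.closure {e, e.swap} = E := by
  by_cases h : ∃ d, d ≠ 1 ∧ (d, (1 : A)) ∈ E
  · obtain ⟨d, hd1, hd⟩ := h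
    exact ⟨(d, 1), (closure_pair_le hd (hswap _ hd)).antisymm
      (hE.trans (prod_le_closure_pair_swap hD (hE hd).1 hd1))⟩
  push Not at h
  have ne_one {e : A × A} (he : e ∈ E) (he1 : e ≠ 1) : e.1 ≠ 1 ∧ e.2 ≠ 1 := by
    constructor
    · intro h1
      exact h e.2 (fun h2 => he1 (Prod.ext h1 h2)) (by simpa [Prod.swap, h1] using hswap e he)
    · intro h2
      exact h e.1 (fun h1 => he1 (Prod.ext h1 h2)) (by simpa [← h2] using he)
  by_cases hne : ∃ e ∈ E, e ≠ 1
  · obtain ⟨e, he, he1⟩ := hne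
    refine ⟨e, (closure_pair_le he (hswap e he)).antisymm fun k hk => ?_⟩
    by_cases hk1 : k = 1
    · exact hk1 ▸ one_mem _
    · have hke : k = e := Prod.ext
        (hD ⟨(hE hk).1, (ne_one hk hk1).1⟩ ⟨(hE he).1, (ne_one he he1).1⟩)
        (hD ⟨(hE hk).2, (ne_one hk hk1).2⟩ ⟨(hE he).2, (ne_one he he1).2⟩)
      exact hke ▸ left_mem_closure_pair k k.swap
  · push Not at hne
    exact ⟨1, by simp [(Subgroup.eq_bot_iff_forall E).2 hne, Subgroup.closure_eq_bot_iff]⟩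

theorem le_of_mul_mem_of_comap_le (hj : ∀ φ, (∃ k, j k = φ) ∨ ∃ k, w * j k = φ)
    {H K : Subgroup W} {k₀ : A × A} (hH : w * j k₀ ∈ H) (hK : w * j k₀ ∈ K)
    (h : H.comap j ≤ K.comap j) : H ≤ K := by
  intro φ hφ
  obtain ⟨k, rfl⟩ | ⟨k, rfl⟩ := hj φ
  · exact h hφ
  · have hk : w * j k = w * j k₀ * j (k₀⁻¹ * k) := by simp [mul_assoc]
    rw [hk] at hφ ⊢
    exact mul_mem hK (h ((Subgroup.mul_mem_cancel_left H hH).1 hφ))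

theorem isNGenerated_four_of_mul_mem [IsCyclic C] (hσ : ((σ.ker : Set A) \ {1}).Subsingleton)
    (hw : ∀ k, w * j k * w⁻¹ = j k.swap) (hj : ∀ φ, (∃ k, j k = φ) ∨ ∃ k, w * j k = φ)
    {H : Subgroup W} {k₀ : A × A} (ht : w * j k₀ ∈ H) : IsNGenerated H 4 := by
  set t := w * j k₀ with t_def
  set E := H.comap j ⊓ (σ.prodMap σ).ker with E_def
  have hE : E ≤ σ.ker.prod σ.ker := fun e he => ⟨congrArg Prod.fst he.2, congrArg Prod.snd he.2⟩
  have conj_t {e : A × A} (he : e ∈ E) : t * j e * t⁻¹ = j e.swap := by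
    have hk₀ : k₀ * e * k₀⁻¹ = e := Prod.ext (conj_eq_of_subsingleton_diff_one hσ _ (hE he).1)
      (conj_eq_of_subsingleton_diff_one hσ _ (hE he).2)
    calc t * j e * t⁻¹ = w * j (k₀ * e * k₀⁻¹) * w⁻¹ := by simp [t_def, mul_assoc]
      _ = j e.swap := by rw [hk₀, hw]
  have hswap (e : A × A) (he : e ∈ E) : e.swap ∈ E := by
    refine Subgroup.mem_inf.2 ⟨?_, congrArg Prod.swap he.2⟩
    rw [Subgroup.mem_comap, ← conj_t he]
    exact mul_mem (mul_mem ht he.1) (inv_mem ht)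
  obtain ⟨e, heE⟩ := exists_closure_pair_swap_eq hσ hE hswap
  have he : e ∈ E := heE ▸ left_mem_closure_pair e e.swap
  obtain ⟨K, hK, hEK⟩ := (isNGenerated_two_of_isCyclic_prod
    ((H.comap j).map (σ.prodMap σ))).exists_inf_ker_sup_eq
  rw [← E_def, ← heE] at hEK
  convert (isNGenerated_closure_pair t (j e)).sup (hK.map j)
  set H' := Subgroup.closure {t, j e} ⊔ K.map j
  have htH' : t ∈ H' := Subgroup.mem_sup_left (left_mem_closure_pair t (j e))
  have heH' : j e ∈ H' := Subgroup.mem_sup_left (right_mem_closure_pair t (j e))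
  have heH'_swap : j e.swap ∈ H' := conj_t he ▸ mul_mem (mul_mem htH' heH') (inv_mem htH')
  refine (le_of_mul_mem_of_comap_le hj ht htH' ?_).antisymm (sup_le (closure_pair_le ht he.1)
    (Subgroup.map_le_iff_le_comap.2 (hEK ▸ le_sup_right)))
  rw [← hEK]
  exact sup_le (closure_pair_le heH' heH'_swap) (Subgroup.map_le_iff_le_comap.1 le_sup_right)

/-- Without an element swapping the two factors, `H` needs two generators over the square of the
kernel of `σ` and two inside it. A swapping element is an additional generator, but it saves one
inside the square of the kernel. -/
theorem isNGenerated_four_of_swap [IsCyclic C] (hσ : ((σ.ker : Set A) \ {1}).Subsingleton)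
    (hw : ∀ k, w * j k * w⁻¹ = j k.swap) (hj : ∀ φ, (∃ k, j k = φ) ∨ ∃ k, w * j k = φ)
    (H : Subgroup W) : IsNGenerated H 4 := by
  by_cases hH : ∃ k, w * j k ∈ H
  · obtain ⟨k, hk⟩ := hH
    exact isNGenerated_four_of_mul_mem hσ hw hj hk
  · push Not at hH
    have hrange : H ≤ j.range := fun φ hφ => (hj φ).resolve_right fun ⟨k, hk⟩ => hH k (hk ▸ hφ)
    rw [← Subgroup.map_comap_eq_self hrange]
    exact (isNGenerated_four_of_isCyclic hσ _).map j

end Wreath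

end NGenerated

section ProductAutomorphisms

open OnePoint

variable {G N : Type*} [Group G] [Group N]

theorem mulAut_mul_conj_mul_inv (α : MulAut G) (g : G) :
    α * MulAut.conj g * α⁻¹ = MulAut.conj (α g) :=
  MulEquiv.ext fun x => by simp

instance normal_range_conj : (MulAut.conj : G →* MulAut G).range.Normal := by
  refine ⟨?_⟩
  rintro _ ⟨g, rfl⟩ α
  exact ⟨α g, (mulAut_mul_conj_mul_inv α g).symm⟩

/-- The outer automorphism group. -/
abbrev OuterAut (G : Type*) [Group G] :=
  MulAut G ⧸ (MulAut.conj : G →* MulAut G).range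

/-- The automorphism of `G × N` which acts on each factor by an automorphism of that factor. -/
def prodAut : MulAut G × MulAut N →* MulAut (G × N) :=
  MonoidHom.mk' (fun k => MulEquiv.prodCongr k.1 k.2) fun _ _ => rfl

@[simp]
theorem prodAut_apply (k : MulAut G × MulAut N) (x : G × N) :
    prodAut k x = (k.1 x.1, k.2 x.2) :=
  rfl

variable (G) in
/-- The automorphism of `G × G` which exchanges the factors. -/
def swapAut : MulAut (G × G) :=
  MulEquiv.prodComm

@[simp]
theorem swapAut_apply (x : G × G) : swapAut G x = x.swap :=
  rfl

/-- A group is centrally indecomposable if it is not the product of two nontrivial subgroups which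
centralize each other. -/
def IsCentrallyIndecomposable (G : Type*) [Group G] : Prop :=
  ∀ H K : Subgroup G, H ≤ Subgroup.centralizer K → H ⊔ K = ⊤ → H = ⊥ ∨ K = ⊥

theorem IsCentrallyIndecomposable.map_inl_or_map_inr {K : Type*} [Group K]
    (hK : IsCentrallyIndecomposable K) {f : G × N →* K} (hf : Function.Surjective f) :
    (∀ a, f (a, 1) = 1) ∨ ∀ b, f (1, b) = 1 := by
  have hcomm : (f.comp (.inl G N)).range ≤ Subgroup.centralizer (f.comp (.inr G N)).range := by
    rintro _ ⟨a, rfl⟩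
    rw [Subgroup.mem_centralizer_iff]
    rintro _ ⟨b, rfl⟩
    simp [← map_mul]
  have hsup : (f.comp (.inl G N)).range ⊔ (f.comp (.inr G N)).range = ⊤ := by
    refine eq_top_iff.2 fun k _ => ?_
    obtain ⟨⟨a, b⟩, rfl⟩ := hf k
    simpa [← map_mul] using Subgroup.mul_mem_sup
      (MonoidHom.mem_range.2 ⟨a, rfl⟩ : f (a, 1) ∈ (f.comp (.inl G N)).range)
      (MonoidHom.mem_range.2 ⟨b, rfl⟩ : f (1, b) ∈ (f.comp (.inr G N)).range)
  refine (hK _ _ hcomm hsup).imp (fun h a => ?_) fun h b => ?_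
  · exact DFunLike.congr_fun (MonoidHom.range_eq_bot_iff.1 h) a
  · exact DFunLike.congr_fun (MonoidHom.range_eq_bot_iff.1 h) b

theorem bijective_fst_comp_inl {φ : MulAut (G × N)} (h₂ : ∀ a, (φ (a, 1)).2 = 1)
    (h₁ : ∀ b, (φ (1, b)).1 = 1) : Function.Bijective fun a => (φ (a, 1)).1 := by
  constructor
  · intro a a' haa'
    have : φ (a, 1) = φ (a', 1) := Prod.ext haa' ((h₂ a).trans (h₂ a').symm)
    exact congrArg Prod.fst (φ.injective this)
  · intro g
    obtain ⟨⟨a, b⟩, h⟩ := φ.surjective (g, 1)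
    have hab : (a, b) = ((a, 1) * (1, b) : G × N) := by simp
    rw [hab, map_mul] at h
    exact ⟨a, by simpa [h₁] using congrArg Prod.fst h⟩

theorem exists_prodAut_eq {φ : MulAut (G × N)} (h₂ : ∀ a, (φ (a, 1)).2 = 1)
    (h₁ : ∀ b, (φ (1, b)).1 = 1) : ∃ k, prodAut k = φ := by
  let α : G →* G := (MonoidHom.fst G N).comp (φ.toMonoidHom.comp (.inl G N))
  let β : N →* N := (MonoidHom.snd G N).comp (φ.toMonoidHom.comp (.inr G N))
  have hα : Function.Bijective α := bijective_fst_comp_inl h₂ h₁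
  have hβ : Function.Bijective β :=
    bijective_fst_comp_inl (φ := (MulEquiv.prodComm.trans φ).trans MulEquiv.prodComm) h₁ h₂
  refine ⟨(.ofBijective α hα, .ofBijective β hβ), MulEquiv.ext fun ⟨a, b⟩ => ?_⟩
  have hab : φ (a, b) = φ (a, 1) * φ (1, b) := by simp [← map_mul]
  rw [hab]
  exact Prod.ext (by simp [α, h₁]) (by simp [β, h₂])

theorem IsCentrallyIndecomposable.exists_prodAut_eq_or [Nontrivial G]
    (hG : IsCentrallyIndecomposable G) (φ : MulAut (G × G)) :
    (∃ k, prodAut k = φ) ∨ ∃ k, swapAut G * prodAut k = φ := by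
  have hfst : Function.Surjective ((MonoidHom.fst G G).comp φ.toMonoidHom) :=
    Prod.fst_surjective.comp φ.surjective
  have hsnd : Function.Surjective ((MonoidHom.snd G G).comp φ.toMonoidHom) :=
    Prod.snd_surjective.comp φ.surjective
  obtain ⟨g, hg⟩ := exists_ne (1 : G)
  rcases hG.map_inl_or_map_inr hfst with h₁ | h₁ <;>
    rcases hG.map_inl_or_map_inr hsnd with h₂ | h₂
  · have : φ (g, 1) = φ 1 := (Prod.ext (h₁ g) (h₂ g) : φ (g, 1) = 1).trans (map_one φ).symm
    exact absurd (congrArg Prod.fst (φ.injective this)) hg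
  · obtain ⟨k, hk⟩ := exists_prodAut_eq (φ := swapAut G * φ) h₁ h₂
    exact .inr ⟨k, by rw [hk]; rfl⟩
  · exact .inl (exists_prodAut_eq h₂ h₁)
  · have : φ (1, g) = φ 1 := (Prod.ext (h₁ g) (h₂ g) : φ (1, g) = 1).trans (map_one φ).symm
    exact absurd (congrArg Prod.snd (φ.injective this)) hg

/-- The homomorphism which `prodAut` induces on outer automorphism groups. -/
def prodOut : OuterAut G × OuterAut N →* OuterAut (G × N) :=
  MonoidHom.noncommCoprod
    (QuotientGroup.map _ _ (prodAut.comp (.inl _ _)) <| by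
      rintro _ ⟨g, rfl⟩
      exact ⟨(g, 1), MulEquiv.ext fun x => Prod.ext (by simp) (by simp)⟩)
    (QuotientGroup.map _ _ (prodAut.comp (.inr _ _)) <| by
      rintro _ ⟨g, rfl⟩
      exact ⟨(1, g), MulEquiv.ext fun x => Prod.ext (by simp) (by simp)⟩) <| by
    rintro ⟨α⟩ ⟨β⟩
    exact congrArg (QuotientGroup.mk' _) (MulEquiv.ext fun x => by simp)

theorem prodOut_mk (α : MulAut G) (β : MulAut N) :
    prodOut ((α : OuterAut G), (β : OuterAut N)) = (prodAut (α, β) : OuterAut (G × N)) :=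
  congrArg (QuotientGroup.mk' _) (MulEquiv.ext fun x => by simp)

theorem IsCentrallyIndecomposable.isNGenerated_four_outerAut [Nontrivial G]
    (hG : IsCentrallyIndecomposable G) {C : Type*} [Group C] [IsCyclic C] {σ : OuterAut G →* C}
    (hσ : ((σ.ker : Set (OuterAut G)) \ {1}).Subsingleton) (H : Subgroup (OuterAut (G × G))) :
    IsNGenerated H 4 := by
  refine isNGenerated_four_of_swap (j := prodOut) (w := (swapAut G : OuterAut (G × G))) hσ ?_ ?_ H
  · rintro ⟨⟨α⟩, ⟨β⟩⟩
    rw [mul_inv_eq_iff_eq_mul]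
    exact congrArg (QuotientGroup.mk' _) (MulEquiv.ext fun x => by simp)
  · rintro ⟨φ⟩
    obtain ⟨⟨α, β⟩, rfl⟩ | ⟨⟨α, β⟩, rfl⟩ := hG.exists_prodAut_eq_or φ
    · exact .inl ⟨(α, β), prodOut_mk α β⟩
    · exact .inr ⟨(α, β), by rw [prodOut_mk]; rfl⟩

namespace PSL2

variable {F : Type*} [Field F]

instance : Nontrivial (PSL2 F) :=
  ⟨upper 1, 1, upper_eq_one_iff.not.2 one_ne_zero⟩

/-- If `H` contains a nontrivial unipotent element of `P`, then the unipotent subgroup of `P`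
contains the subgroup `K`, which is normal: a nontrivial `K` would fix `P` and only `P`. -/
theorem eq_bot_of_le_centralizer {H K : Subgroup (PSL2 F)} (hHK : H ≤ Subgroup.centralizer K)
    (hsup : H ⊔ K = ⊤) {P : ProjLine F} {y : PSL2 F} (hyH : y ∈ H) (hy : y ∈ unip P)
    (hy1 : y ≠ 1) : K = ⊥ := by
  by_contra hK
  have hKP : K ≤ unip P := fun z hz =>
    isMobiusAction.mem_unip_of_commute hy hy1 (hHK hyH z hz)
  obtain ⟨z, hz, hz1⟩ := K.bot_or_exists_ne_one.resolve_left hK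
  have hnormal : Subgroup.normalizer (K : Set (PSL2 F)) = ⊤ :=
    eq_top_iff.2 (hsup ▸ sup_le (hHK.trans (Subgroup.centralizer_le_normalizer _))
      Subgroup.le_normalizer)
  refine stabilizer_ne_top P (eq_top_iff.2 fun g _ => ?_)
  rw [mem_stabilizer_iff, isMobiusAction.smul_eq_iff_conj_mem_unip (hKP hz) hz1]
  have hg : g ∈ Subgroup.normalizer (K : Set (PSL2 F)) := hnormal ▸ Subgroup.mem_top g
  exact hKP ((Subgroup.mem_normalizer_iff.1 hg z).1 hz)

theorem isCentrallyIndecomposable : IsCentrallyIndecomposable (PSL2 F) := by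
  intro H K hHK hsup
  have hKH : K ≤ Subgroup.centralizer H := Subgroup.le_centralizer_iff.1 hHK
  have hu : upper (1 : F) ∈ (↑(H ⊔ K) : Set (PSL2 F)) := hsup ▸ Subgroup.mem_top _
  rw [Subgroup.coe_mul_of_left_le_normalizer_right H K
    (hHK.trans (Subgroup.centralizer_le_normalizer _))] at hu
  obtain ⟨a, ha, b, hb, hab : a * b = upper 1⟩ := hu
  have hcomm : b * a = a * b := hHK ha b hb
  have hu1 : upper (1 : F) ≠ 1 := upper_eq_one_iff.not.2 one_ne_zero
  have ha' : a ∈ unip ∞ := isMobiusAction.mem_unip_of_commute (upper_mem_unip 1) hu1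
    (by rw [← hab, mul_assoc, hcomm])
  have hb' : b ∈ unip ∞ := isMobiusAction.mem_unip_of_commute (upper_mem_unip 1) hu1
    (by rw [← hab, ← mul_assoc, hcomm])
  by_cases ha1 : a = 1
  · have hb1 : b ≠ 1 := by
      rintro rfl
      exact hu1 (by rw [← hab, ha1, one_mul])
    exact .inl (eq_bot_of_le_centralizer hKH (by rwa [sup_comm]) hb hb' hb1)
  · exact .inr (eq_bot_of_le_centralizer hHK hsup ha ha' ha1)

variable [Finite F]

/-- The field automorphism which underlies an outer automorphism of `PSL₂(F)`. -/
noncomputable def outerFieldAut : OuterAut (PSL2 F) →* RingAut F :=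
  QuotientGroup.lift _ fieldAut <| by
    rintro _ ⟨g, rfl⟩
    exact fieldAut_conj g

theorem subsingleton_ker_outerFieldAut_diff_one :
    (((outerFieldAut (F := F)).ker : Set (OuterAut (PSL2 F))) \ {1}).Subsingleton := by
  rintro ⟨α⟩ ⟨hα, hα'⟩ ⟨β⟩ ⟨hβ, hβ'⟩
  have hα'' := (QuotientGroup.eq_one_iff α).not.1 hα'
  have hβ'' := (QuotientGroup.eq_one_iff β).not.1 hβ'
  have mul_eq_one : (α * β : OuterAut (PSL2 F)) = 1 :=
    (QuotientGroup.eq_one_iff (α * β)).2 (mul_mem_range_conj hα hβ hα'' hβ'')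
  have sq_eq_one : (β * β : OuterAut (PSL2 F)) = 1 :=
    (QuotientGroup.eq_one_iff (β * β)).2 (mul_mem_range_conj hβ hβ hβ'' hβ'')
  exact mul_right_cancel (mul_eq_one.trans sq_eq_one.symm)

theorem isNGenerated_four_outerAut_prod (H : Subgroup (OuterAut (PSL2 F × PSL2 F))) :
    IsNGenerated H 4 := by
  have := isCyclic_ringAut F
  exact isCentrallyIndecomposable.isNGenerated_four_outerAut
    subsingleton_ker_outerFieldAut_diff_one H

theorem isNGenerated_of_inf_range_conj {H : Subgroup (MulAut (PSL2 F × PSL2 F))} {n : ℕ}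
    (h : IsNGenerated (H ⊓ (MulAut.conj : PSL2 F × PSL2 F →* _).range) n) :
    IsNGenerated H (n + 4) :=
  .of_inf_ker (f := QuotientGroup.mk' _) (by rwa [QuotientGroup.ker_mk'])
    (isNGenerated_four_outerAut_prod _)

end PSL2

end ProductAutomorphisms

section MaximalSubgroups

section Coatom

variable {G : Type*} [Group G] {A H : Subgroup (MulAut G)}

theorem map_mem_comap_conj {φ : MulAut G} (hφ : φ ∈ H) {x : G} (hx : x ∈ H.comap MulAut.conj) :
    φ x ∈ H.comap MulAut.conj := by
  rw [Subgroup.mem_comap, ← mulAut_mul_conj_mul_inv]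
  exact mul_mem (mul_mem hφ hx) (inv_mem hφ)

theorem map_comap_conj_eq {φ : MulAut G} (hφ : φ ∈ H) :
    (H.comap MulAut.conj).map φ.toMonoidHom = H.comap MulAut.conj :=
  (Subgroup.map_le_iff_le_comap.2 fun _ => map_mem_comap_conj hφ).antisymm fun x hx =>
    ⟨φ⁻¹ x, map_mem_comap_conj (inv_mem hφ) hx, MulAut.apply_inv_self G φ x⟩

/-- By maximality, `H` and the inner automorphisms by elements of `W` generate `H` or `A`. -/
theorem eq_top_or_comap_conj_eq (hA : (MulAut.conj : G →* MulAut G).range ≤ A) (hHA : H ≤ A)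
    (hH : IsCoatom (H.subgroupOf A)) {W : Subgroup G} (hle : H.comap MulAut.conj ≤ W)
    (hW : ∀ φ ∈ H, ∀ x ∈ W, φ x ∈ W) : W = ⊤ ∨ H.comap MulAut.conj = W := by
  have hnorm : H ≤ Subgroup.normalizer (W.map MulAut.conj : Subgroup (MulAut G)) := by
    rw [Subgroup.le_normalizer_iff]
    rintro φ hφ _ ⟨w, hw, rfl⟩
    exact ⟨φ w, hW φ hφ w hw, (mulAut_mul_conj_mul_inv φ w).symm⟩
  have hsub : H.subgroupOf A ≤ (H ⊔ W.map MulAut.conj).subgroupOf A :=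
    Subgroup.comap_mono le_sup_left
  obtain htop | heq := hH.le_iff.1 hsub
  · refine .inl (eq_top_iff.2 fun g _ => ?_)
    have hg : MulAut.conj g ∈ (↑(H ⊔ W.map MulAut.conj) : Set (MulAut G)) :=
      Subgroup.subgroupOf_eq_top.1 htop (hA ⟨g, rfl⟩)
    rw [Subgroup.coe_mul_of_left_le_normalizer_right _ _ hnorm] at hg
    obtain ⟨φ, hφ, _, ⟨w, hw, rfl⟩, hφw : φ * MulAut.conj w = MulAut.conj g⟩ := hg
    have hgw : g * w⁻¹ ∈ H.comap MulAut.conj := by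
      rwa [Subgroup.mem_comap, map_mul, ← hφw, map_inv, mul_inv_cancel_right]
    simpa using mul_mem (hle hgw) hw
  · rw [Subgroup.subgroupOf_inj, inf_eq_left.2 hHA, inf_eq_left.2 (sup_le hHA
      ((Subgroup.map_le_range _ _).trans hA))] at heq
    exact .inr (hle.antisymm (Subgroup.map_le_iff_le_comap.1 (heq ▸ le_sup_right)))

end Coatom

namespace PSL2

variable {F : Type*} [Field F] {T : Subgroup (PSL2 F)} {P : ProjLine F}

/-- `T` fixes `P` and contains a nontrivial unipotent element of `P`. These are the subgroups
which may need more than two generators. -/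
def IsBorelAt (T : Subgroup (PSL2 F)) (P : ProjLine F) : Prop :=
  T ≤ stabilizer (PSL2 F) P ∧ T ⊓ unip P ≠ ⊥

theorem IsBorelAt.exists_mem_unip (h : IsBorelAt T P) : ∃ y ∈ T, y ∈ unip P ∧ y ≠ 1 := by
  obtain ⟨y, ⟨hyT, hyP⟩, hy1⟩ := (T ⊓ unip P).bot_or_exists_ne_one.resolve_left h.2
  exact ⟨y, hyT, hyP, hy1⟩

theorem IsBorelAt.unip_ne_bot (h : IsBorelAt T P) : unip P ≠ ⊥ :=
  fun hP => h.2 (by rw [hP, inf_bot_eq])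

theorem IsBorelAt.eq {R : ProjLine F} (hP : IsBorelAt T P) (hR : IsBorelAt T R) : P = R := by
  obtain ⟨y, hyT, hyP, hy1⟩ := hP.exists_mem_unip
  exact (isMobiusAction.eq_of_smul_eq hyP hy1 (hR.1 hyT)).symm

/-- The intersection of the stabilizers of the points at which `T` is Borel. There is at most one
such point, so this is a Borel subgroup, or the whole group if there is none. -/
noncomputable def borelHull (T : Subgroup (PSL2 F)) : Subgroup (PSL2 F) :=
  ⨅ (P) (_ : IsBorelAt T P), stabilizer (PSL2 F) P

theorem mem_borelHull_iff {g : PSL2 F} : g ∈ borelHull T ↔ ∀ P, IsBorelAt T P → g • P = P := by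
  simp [borelHull, Subgroup.mem_iInf]

theorem le_borelHull (T : Subgroup (PSL2 F)) : T ≤ borelHull T :=
  le_iInf₂ fun _ hP => hP.1

theorem IsBorelAt.borelHull_eq (h : IsBorelAt T P) : borelHull T = stabilizer (PSL2 F) P :=
  (iInf₂_le P h).antisymm (le_iInf₂ fun _ hR => by rw [h.eq hR])

theorem not_isBorelAt_of_borelHull_eq_top (h : borelHull T = ⊤) : ¬IsBorelAt T P :=
  fun hP => stabilizer_ne_top P (hP.borelHull_eq ▸ h)

theorem IsBorelAt.of_le_normalizer {S : Subgroup (PSL2 F)} (h : IsBorelAt T P) (hTS : T ≤ S)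
    (hST : S ≤ Subgroup.normalizer T) : IsBorelAt S P := by
  obtain ⟨y, hyT, hyP, hy1⟩ := h.exists_mem_unip
  refine ⟨fun g hg => ?_, ne_bot_of_le_ne_bot h.2 (inf_le_inf_right _ hTS)⟩
  have hgy : (g * y * g⁻¹) • P = P := h.1 (Subgroup.le_normalizer_iff.1 hST g hg y hyT)
  exact (isMobiusAction.eq_of_smul_eq (isMobiusAction.conj_mem_unip g hyP)
    (conj_eq_one_iff.not.2 hy1) hgy).symm

section Finite

variable [Finite F]

theorem isNGenerated_two_of_forall_not_isBorelAt (h : ∀ P, ¬IsBorelAt T P) : IsNGenerated T 2 := by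
  obtain ⟨x, y, rfl⟩ | ⟨P, hP⟩ := isMobiusAction.exists_closure_pair_eq_or_le_stabilizer T
  · exact isNGenerated_closure_pair x y
  · exact absurd hP (h P)

theorem isNGenerated_two_borelHull (T : Subgroup (PSL2 F)) : IsNGenerated (borelHull T) 2 := by
  by_cases h : ∃ P, IsBorelAt T P
  · obtain ⟨P, hP⟩ := h
    obtain ⟨x, y, hxy⟩ := exists_closure_pair_eq_stabilizer hP.unip_ne_bot
    rw [hP.borelHull_eq, ← hxy]
    exact isNGenerated_closure_pair x y
  · have htop : borelHull T = ⊤ := eq_top_iff.2 (le_iInf₂ fun P hP => absurd ⟨P, hP⟩ h)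
    obtain ⟨x, y, hxy, -⟩ := exists_closure_pair_eq_top_coprime F
    rw [htop, ← hxy]
    exact isNGenerated_closure_pair x y

theorem map_mem_borelHull (α : MulAut (PSL2 F)) {g : PSL2 F} (hg : g ∈ borelHull T) :
    α g ∈ borelHull (T.map α.toMonoidHom) := by
  rw [mem_borelHull_iff] at hg ⊢
  intro P' hP'
  obtain ⟨_, ⟨y, hyT, rfl⟩, hyP', hy1⟩ := hP'.exists_mem_unip
  obtain ⟨P, hP⟩ := exists_map_mem_unip_iff α⁻¹ hP'.unip_ne_bot
  have hfix (z : PSL2 F) : α z • P' = P' ↔ z • P = P := by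
    simpa using (isMobiusAction.map_smul_eq_iff hP'.unip_ne_bot hP hP (α z)).symm
  have hyP : y ∈ unip P := by simpa using (hP (α y)).2 hyP'
  refine (hfix g).2 (hg P ⟨fun z hz => (hfix z).1 (hP'.1 ⟨z, hz, rfl⟩), fun hbot => hy1 ?_⟩)
  have : y ∈ T ⊓ unip P := ⟨hyT, hyP⟩
  rw [hbot, Subgroup.mem_bot] at this
  simp [this]

end Finite

variable {M : Subgroup (PSL2 F × PSL2 F)}

/-- The product of the Borel hulls of the two projections of `M`. -/
noncomputable def prodHull (M : Subgroup (PSL2 F × PSL2 F)) : Subgroup (PSL2 F × PSL2 F) :=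
  (borelHull (M.map (.fst _ _))).prod (borelHull (M.map (.snd _ _)))

theorem le_prodHull (M : Subgroup (PSL2 F × PSL2 F)) : M ≤ prodHull M := fun _ hx =>
  ⟨le_borelHull _ (Subgroup.mem_map_of_mem _ hx), le_borelHull _ (Subgroup.mem_map_of_mem _ hx)⟩

variable [Finite F]

theorem map_mem_prodHull (φ : MulAut (PSL2 F × PSL2 F)) {x : PSL2 F × PSL2 F}
    (hx : x ∈ prodHull M) : φ x ∈ prodHull (M.map φ.toMonoidHom) := by
  obtain ⟨k, rfl⟩ | ⟨k, rfl⟩ := isCentrallyIndecomposable.exists_prodAut_eq_or φ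
  all_goals
    have h₁ := map_mem_borelHull k.1 hx.1
    have h₂ := map_mem_borelHull k.2 hx.2
    rw [Subgroup.map_map] at h₁ h₂
    refine ⟨?_, ?_⟩ <;> rw [Subgroup.map_map]
  exacts [h₁, h₂, h₂, h₁]

theorem isNGenerated_four_of_prodHull_eq_top (h : prodHull M = ⊤) : IsNGenerated M 4 := by
  have mem_prodHull (x : PSL2 F × PSL2 F) : x ∈ prodHull M := h ▸ Subgroup.mem_top x
  have h₁ : borelHull (M.map (.fst _ _)) = ⊤ := eq_top_iff.2 fun g _ => (mem_prodHull (g, 1)).1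
  have h₂ : borelHull (M.map (.snd _ _)) = ⊤ := eq_top_iff.2 fun g _ => (mem_prodHull (1, g)).2
  refine .of_comap_inl (isNGenerated_two_of_forall_not_isBorelAt fun P hP => ?_)
    (isNGenerated_two_of_forall_not_isBorelAt fun P => not_isBorelAt_of_borelHull_eq_top h₂)
  refine not_isBorelAt_of_borelHull_eq_top h₁ (hP.of_le_normalizer ?_ ?_)
  · exact fun x hx => ⟨(x, 1), hx, rfl⟩
  · rw [Subgroup.le_normalizer_iff]
    rintro _ ⟨⟨g, k⟩, hgk, rfl⟩ y hy
    simpa using mul_mem (mul_mem hgk hy) (inv_mem hgk)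

theorem isNGenerated_four_comap_conj {A H : Subgroup (MulAut (PSL2 F × PSL2 F))}
    (hA : (MulAut.conj : PSL2 F × PSL2 F →* _).range ≤ A) (hHA : H ≤ A)
    (hH : IsCoatom (H.subgroupOf A)) : IsNGenerated (H.comap MulAut.conj) 4 := by
  have hinv (φ) (hφ : φ ∈ H) (x) (hx : x ∈ prodHull (H.comap MulAut.conj)) :
      φ x ∈ prodHull (H.comap MulAut.conj) := by
    simpa only [map_comap_conj_eq hφ] using map_mem_prodHull φ hx
  obtain htop | heq := eq_top_or_comap_conj_eq hA hHA hH (le_prodHull _) hinv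
  · exact isNGenerated_four_of_prodHull_eq_top htop
  · rw [heq]
    exact (isNGenerated_two_borelHull _).prod (isNGenerated_two_borelHull _)

end PSL2

end MaximalSubgroups

/-- Let `F` be a finite field and `G₀ = PSL₂(F) × PSL₂(F)`.  Then `G₀` has trivial
center, and so can be identified with the subgroup `Inn(G₀)` of inner automorphisms
of `Aut(G₀)`.  For every group `G` with `Inn(G₀) ≤ G ≤ Aut(G₀)` and every maximal
subgroup `H` of `G`, one has `d(G) ≤ 6`, `d(H) ≤ 8` and `d(H ∩ Inn(G₀)) ≤ 4`. -/
theorem psl2_times_psl2_automorphism_generation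
    (F : Type) [Field F] [Fintype F] :
    Subgroup.center (PSL2 F × PSL2 F) = ⊥ ∧
    ∀ G : Subgroup (MulAut (PSL2 F × PSL2 F)),
      (MulAut.conj : (PSL2 F × PSL2 F) →* MulAut (PSL2 F × PSL2 F)).range ≤ G →
      minGen ↥G ≤ 6 ∧
      ∀ H : Subgroup (MulAut (PSL2 F × PSL2 F)), H ≤ G →
        IsCoatom (H.subgroupOf G) →
        minGen ↥H ≤ 8 ∧
        minGen ↥(H ⊓ (MulAut.conj :
          (PSL2 F × PSL2 F) →* MulAut (PSL2 F × PSL2 F)).range) ≤ 4 := by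
  refine ⟨by rw [Subgroup.center_prod, PSL2.center_eq_bot, Subgroup.bot_prod_bot],
    fun G hG => ⟨?_, fun H hHG hH => ?_⟩⟩
  · obtain ⟨x, y, hxy, hcoprime⟩ := PSL2.exists_closure_pair_eq_top_coprime F
    have hInn : IsNGenerated (G ⊓ MulAut.conj.range) 2 := by
      rw [inf_eq_right.2 hG, MonoidHom.range_eq_map]
      exact (isNGenerated_top_prod_self hxy hcoprime).map _
    exact (PSL2.isNGenerated_of_inf_range_conj hInn).minGen_le
  · have hInn : IsNGenerated (H ⊓ MulAut.conj.range) 4 := by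
      rw [inf_comm, ← Subgroup.map_comap_eq]
      exact (PSL2.isNGenerated_four_comap_conj hG hHG hH).map _
    exact ⟨(PSL2.isNGenerated_of_inf_range_conj hInn).minGen_le, hInn.minGen_le⟩
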